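/- arXiv:2112.00472 — 6 statements merged into one kernel-verified Lean document; each statement's English description precedes it below -/
import Mathlib

section
/- Let p ≥ 5 be a prime and q a prime number. Let a and b be integers with (1/(2p))·q^{p/(p−2)} < a, b < (1/(2p) + 1/(2^p·p^p))·q^{p/(p−2)} (inequalities of real numbers). Set g(a,b) = Σ_{i=0}^{p−1} a^{p−1−i} b^{i} and f_q(a,b) = 2(a^p + b^p)q^p − (a−b)²q^{2p} − g(a,b)². Suppose that D := f_q(a,b) is squarefree, that D ≥ 4·a·b^{(p−1)/2}·q^{(p+1)/2}, and that ((2p² − 1)/(2p)^p)·q^{p(p−1)/(p−2)} > p. Then the ideal class group of the imaginary quadratic field ℚ(√−D) contains a subgroup isomorphic to (ℤ/pℤ) × (ℤ/pℤ). -/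
open scoped BigOperators

/-- `g(a,b) = Σ_{i=0}^{p−1} a^{p−1−i} b^{i}`. -/
def gPoly (p : ℕ) (a b : ℤ) : ℤ := ∑ i ∈ Finset.range p, a ^ (p - 1 - i) * b ^ i

/-- `f_q(a,b) = 2(a^p + b^p)q^p − (a−b)²q^{2p} − g(a,b)²`. -/
def fPoly (p : ℕ) (q a b : ℤ) : ℤ :=
  2 * (a ^ p + b ^ p) * q ^ p - (a - b) ^ 2 * q ^ (2 * p) - (gPoly p a b) ^ 2

/-!
With `x, y = (a - b) q^p ± g(a,b)` and `D = f_q(a,b)` one has `x² + D = 4(aq)^p` and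
`y² + D = 4(bq)^p`. Since `D` is squarefree, the factor `(x + √-D)/2` of `(aq)^p` is coprime to its
conjugate, hence generates the `p`-th power of an ideal `I` of norm `aq`, coprime to its conjugate;
likewise `y` gives an ideal `J` of norm `bq`.

An integer `(m + n√-D)/2` has norm `(m² + Dn²)/4`, so if its norm is at most `D/4`, then `n = 0`:
otherwise `m = 0`, `n² = 1` and `4 ∣ D`. Replacing `J` by its conjugate `J'` inverts its class.
Hence, if `I J^k` were principal with `|k| ≤ p/2`, the hypothesis `4aq(bq)^|k| ≤ D` would make
`I J^|k|` or `I J'^|k|` equal to its own conjugate, and coprimality would force `aq = (bq)^|k|`.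
As every residue modulo `p` has a representative with `|k| ≤ p/2`, the classes of `I` and `J` are
independent of order `p`.
-/

open NumberField Ideal
open NumberField.RingOfIntegers (mapRingHom)
open scoped nonZeroDivisors

section Group

lemma injective_coprod_of_forall_add_zsmul_ne_zero {A : Type*} [AddCommGroup A] {p : ℕ}
    [Fact p.Prime] (f g : ZMod p →+ A) (hg : g 1 ≠ 0)
    (h : ∀ k : ℤ, k.natAbs ≤ p / 2 → f 1 + k • g 1 ≠ 0) :
    Function.Injective (f.coprod g) := by
  rw [injective_iff_map_eq_zero]
  rintro ⟨m, n⟩ hmn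
  have map_mul_eq_zero (c : ZMod p) : f (c * m) + g (c * n) = 0 := by
    obtain ⟨c, rfl⟩ := ZMod.intCast_surjective c
    simpa [← zsmul_eq_mul, ← smul_add] using congrArg (c • ·) hmn
  have hm : m = 0 := by
    by_contra hm
    apply h _ (ZMod.natAbs_valMinAbs_le (m⁻¹ * n))
    rw [← map_zsmul, zsmul_one, ZMod.coe_valMinAbs, ← inv_mul_cancel₀ hm]
    exact map_mul_eq_zero m⁻¹
  have hn : n = 0 := by
    by_contra hn
    apply hg
    simpa [hm, inv_mul_cancel₀ hn] using map_mul_eq_zero n⁻¹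
  rw [hm, hn, Prod.mk_zero_zero]

theorem exists_subgroup_mulEquiv_zmod_prod {G : Type*} [CommGroup G] {p : ℕ} (hp : p.Prime)
    {x y : G} (hx : x ^ p = 1) (hy : y ^ p = 1) (hy_ne : y ≠ 1)
    (h : ∀ k : ℤ, k.natAbs ≤ p / 2 → x * y ^ k ≠ 1) :
    ∃ H : Subgroup G, Nonempty (H ≃* Multiplicative (ZMod p × ZMod p)) := by
  have : Fact p.Prime := ⟨hp⟩
  have exists_hom (z : G) (hz : z ^ p = 1) : ∃ f : ZMod p →+ Additive G, f 1 = .ofMul z :=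
    ⟨ZMod.lift p ⟨zmultiplesHom _ (.ofMul z), by simp [← ofMul_pow, hz]⟩,
      by simpa using ZMod.lift_coe p ⟨zmultiplesHom _ (Additive.ofMul z), _⟩ 1⟩
  obtain ⟨f, hf⟩ := exists_hom x hx
  obtain ⟨g, hg⟩ := exists_hom y hy
  have hinj : Function.Injective (AddMonoidHom.toMultiplicativeLeft (f.coprod g)) :=
    injective_coprod_of_forall_add_zsmul_ne_zero f g (hg ▸ hy_ne) (by rw [hf, hg]; exact h)
  exact ⟨_, ⟨(MonoidHom.ofInjective hinj).symm⟩⟩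

end Group

section Conjugation

lemma exists_smul_one_add_smul_of_adjoin_eq_top {R A : Type*} [CommRing R] [CommRing A]
    [Algebra R A] {d : R} {α : A} (hα : α ^ 2 = algebraMap R A d)
    (hgen : Algebra.adjoin R {α} = ⊤) (z : A) : ∃ u v : R, z = u • (1 : A) + v • α := by
  let f : QuadraticAlgebra R d 0 →ₐ[R] A :=
    QuadraticAlgebra.lift ⟨α, by rw [← sq, hα, zero_smul, add_zero, Algebra.smul_def, mul_one]⟩
  have hα_mem : α ∈ f.range := ⟨⟨0, 1⟩, by simp [f]⟩
  obtain ⟨w, rfl⟩ : z ∈ f.range := Algebra.adjoin_singleton_le hα_mem (hgen ▸ Algebra.mem_top)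
  exact ⟨w.re, w.im, rfl⟩

lemma exists_algHom_apply_eq_neg {F A : Type*} [Field F] [CommRing A] [Nontrivial A] [Algebra F A]
    {d : F} {α : A} (hd : ∀ r : F, r ^ 2 ≠ d) (hα : α ^ 2 = algebraMap F A d)
    (hgen : Algebra.adjoin F {α} = ⊤) : ∃ σ : A →ₐ[F] A, σ α = -α := by
  open Polynomial in
  have hmonic : (X ^ 2 - C d).Monic := monic_X_pow_sub_C d two_ne_zero
  have hroot : aeval α (X ^ 2 - C d) = 0 := by simp [hα]
  have hmin : X ^ 2 - C d = minpoly F α := minpoly.eq_of_irreducible_of_monic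
    (X_pow_sub_C_irreducible_of_prime Nat.prime_two hd) hroot hmonic
  let pb := PowerBasis.ofAdjoinEqTop ⟨_, hmonic, hroot⟩ hgen
  have hpb : pb.gen = α := PowerBasis.ofAdjoinEqTop_gen _ hgen
  have hneg : aeval (-α) (minpoly F pb.gen) = 0 := by simp [hpb, ← hmin, hα]
  exact ⟨pb.lift (-α) hneg, by simpa only [hpb] using pb.lift_gen (-α) hneg⟩

lemma comp_self_eq_id_of_apply_eq_neg {R A : Type*} [CommSemiring R] [Ring A] [Algebra R A]
    {α : A} {σ : A →ₐ[R] A} (hgen : Algebra.adjoin R {α} = ⊤) (hσ : σ α = -α) :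
    σ.comp σ = AlgHom.id R A :=
  AlgHom.ext_of_adjoin_eq_top hgen (by simp [Set.EqOn, hσ])

end Conjugation

section QuadraticIntegers

lemma isIntegral_of_squarefree_of_isIntegral_mul_sq {R F : Type*} [CommRing R] [IsDomain R]
    [IsIntegrallyClosed R] [DecompositionMonoid R] [Field F] [Algebra R F] [IsFractionRing R F]
    {d : R} (hd : Squarefree d) {w : F} (hw : IsIntegral R (algebraMap R F d * w ^ 2)) :
    IsIntegral R w := by
  have hd_ne : algebraMap R F d ≠ 0 :=
    (map_ne_zero_iff _ (IsFractionRing.injective R F)).mpr hd.ne_zero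
  obtain ⟨m, hm⟩ := IsIntegrallyClosed.isIntegral_iff.mp hw
  obtain ⟨n, hn⟩ : ∃ n, algebraMap R F n = algebraMap R F d * w := by
    refine IsIntegrallyClosed.exists_algebraMap_eq_of_isIntegral_pow two_pos ?_
    convert (isIntegral_algebraMap (x := d)).mul hw using 1
    ring
  have hdvd : d ∣ n ^ 2 := ⟨m, IsFractionRing.injective R F (by
    rw [map_pow, map_mul, hn, hm]; ring)⟩
  obtain ⟨k, rfl⟩ := hd.isRadical 2 n hdvd
  rw [map_mul] at hn
  exact mul_left_cancel₀ hd_ne hn ▸ isIntegral_algebraMap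

variable {K : Type*} [Field K]

lemma exists_intCast_eq_of_isIntegral [CharZero K] {r : ℚ} (hr : IsIntegral ℤ (r : K)) :
    ∃ n : ℤ, r = n := by
  rw [← eq_ratCast (algebraMap ℚ K), isIntegral_algebraMap_iff (algebraMap ℚ K).injective] at hr
  obtain ⟨n, hn⟩ := IsIntegrallyClosed.isIntegral_iff.mp hr
  exact ⟨n, hn.symm⟩

variable {α : K} {D : ℤ}

section Coordinates

variable [CharZero K] {σ : K →ₐ[ℚ] K}

lemma exists_int_coordinates (hsf : Squarefree D) (hα : α ^ 2 = -(D : K))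
    (hgen : Algebra.adjoin ℚ {α} = ⊤) (hσ : σ α = -α) {z : K} (hz : IsIntegral ℤ z) :
    ∃ m n N : ℤ, 2 * z = m + n * α ∧ z * σ z = N ∧ m ^ 2 + D * n ^ 2 = 4 * N := by
  obtain ⟨u, v, huv⟩ :=
    exists_smul_one_add_smul_of_adjoin_eq_top (d := (-D : ℚ)) (by simpa using hα) hgen z
  replace huv : z = u + v * α := by simpa [Rat.smul_def] using huv
  have hσz : σ z = u - v * α := by simp [huv, hσ, sub_eq_add_neg]
  have hσz_int : IsIntegral ℤ (σ z) := hz.map (σ.restrictScalars ℤ)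
  have htrace : z + σ z = (2 * u : ℚ) := by
    rw [hσz, huv]; push_cast; ring
  obtain ⟨m, hm⟩ : ∃ m : ℤ, 2 * u = m := exists_intCast_eq_of_isIntegral (K := K) <| by
    rw [← htrace]; exact hz.add hσz_int
  have hnorm : z * σ z = (u ^ 2 + D * v ^ 2 : ℚ) := by
    rw [hσz, huv]; push_cast; linear_combination -(v ^ 2 : K) * hα
  obtain ⟨N, hN⟩ : ∃ N : ℤ, u ^ 2 + D * v ^ 2 = N := exists_intCast_eq_of_isIntegral (K := K) <| by
    rw [← hnorm]; exact hz.mul hσz_int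
  have hv : algebraMap ℤ ℚ D * (2 * v) ^ 2 = (4 * N - m ^ 2 : ℤ) := by
    push_cast [← hN, ← hm]; rw [eq_intCast]; ring
  obtain ⟨n, hn⟩ := IsIntegrallyClosed.isIntegral_iff.mp <|
    isIntegral_of_squarefree_of_isIntegral_mul_sq hsf (w := 2 * v) (hv ▸ isIntegral_algebraMap)
  rw [eq_intCast] at hn
  refine ⟨m, n, N, ?_, by rw [hnorm, hN, Rat.cast_intCast], ?_⟩
  · rw [← Rat.cast_intCast m, ← Rat.cast_intCast n, ← hm, hn, huv]; push_cast; ring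
  · rw [← hn, eq_intCast] at hv
    have : (D : ℚ) * n ^ 2 = 4 * N - m ^ 2 := by exact_mod_cast hv
    exact_mod_cast (by linarith : (m : ℚ) ^ 2 + D * n ^ 2 = 4 * N)

lemma exists_nonneg_mul_conj_eq (hD : 0 < D) (hsf : Squarefree D) (hα : α ^ 2 = -(D : K))
    (hgen : Algebra.adjoin ℚ {α} = ⊤) (hσ : σ α = -α) {z : K} (hz : IsIntegral ℤ z) :
    ∃ N : ℤ, 0 ≤ N ∧ z * σ z = N ∧ (4 * N ≤ D → σ z = z) := by
  obtain ⟨m, n, N, hmn, hN, hsum⟩ := exists_int_coordinates hsf hα hgen hσ hz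
  refine ⟨N, by nlinarith [sq_nonneg m, sq_nonneg n], hN, fun hle ↦ ?_⟩
  have hn : n = 0 := by
    by_contra hn
    have hn_sq : 1 ≤ n ^ 2 := Int.add_one_le_iff.mpr (sq_pos_of_ne_zero hn)
    have hD_eq : D = 2 * 2 * N := by nlinarith [sq_nonneg m]
    have := hsf 2 ⟨N, hD_eq⟩
    revert this; decide
  apply mul_left_cancel₀ (two_ne_zero (α := K))
  have h2z : 2 * z = m := by rw [hmn, hn, Int.cast_zero, zero_mul, add_zero]
  calc 2 * σ z = σ (2 * z) := by rw [map_mul, map_ofNat]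
    _ = 2 * z := by rw [h2z, map_intCast]

end Coordinates
end QuadraticIntegers

section Ideals

/-- Given a ring endomorphism `s` thought of as conjugation, `IsSplitOfNorm s I A` says that `I` is
coprime to its conjugate and has norm `A`, in the sense that `I * s(I) = (A)`. In a quadratic order
such an ideal is a product of split primes, no two of them conjugate. -/
structure IsSplitOfNorm {R : Type*} [CommRing R] (s : R →+* R) (I : Ideal R) (A : R) : Prop where
  isCoprime : IsCoprime I (I.map s)
  mul_map : I * I.map s = span {A}

section CommRing

variable {R : Type*} [CommRing R] {s : R →+* R} {I J : Ideal R} {A B : R}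

lemma IsSplitOfNorm.map (hs : s.comp s = RingHom.id R) (hI : IsSplitOfNorm s I A) :
    IsSplitOfNorm s (I.map s) A where
  isCoprime := by rw [map_map, hs, map_id]; exact hI.isCoprime.symm
  mul_map := by rw [map_map, hs, map_id, mul_comm, hI.mul_map]

lemma IsSplitOfNorm.ne_bot (hI : IsSplitOfNorm s I A) (hA : A ≠ 0) : I ≠ ⊥ := by
  rintro rfl
  exact hA (span_singleton_eq_bot.mp (by rw [← hI.mul_map, bot_mul]))

lemma ideal_eq_of_mul_eq_mul_of_isCoprime {I I' J J' : Ideal R} (hI : IsCoprime I I')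
    (hJ : IsCoprime J J') (h : I * J = I' * J') : I = J' :=
  le_antisymm (le_of_dvd (hJ.symm.dvd_of_dvd_mul_right (Dvd.intro_left _ h.symm)))
    (le_of_dvd (hI.dvd_of_dvd_mul_left (Dvd.intro _ h)))

lemma IsSplitOfNorm.span_eq_span_pow (hI : IsSplitOfNorm s I A) (hJ : IsSplitOfNorm s J B)
    {k : ℕ} {z : R} (hz : I * J ^ k = span {z}) (hsz : s z = z) : span {A} = span {B ^ k} := by
  have hconj : I * J ^ k = I.map s * J.map s ^ k := by
    rw [← Ideal.map_pow, ← Ideal.map_mul, hz, map_span, Set.image_singleton, hsz]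
  have hI_eq : I = J.map s ^ k :=
    ideal_eq_of_mul_eq_mul_of_isCoprime hI.isCoprime hJ.isCoprime.pow hconj
  have hmapI_eq : I.map s = J ^ k :=
    ideal_eq_of_mul_eq_mul_of_isCoprime hI.isCoprime.symm hJ.isCoprime.symm.pow hconj.symm
  calc span {A} = I * I.map s := hI.mul_map.symm
    _ = J.map s ^ k * J ^ k := by rw [hmapI_eq, ← hI_eq]
    _ = (J * J.map s) ^ k := by rw [mul_pow, mul_comm]
    _ = span {B ^ k} := by rw [hJ.mul_map, span_singleton_pow]

lemma IsSplitOfNorm.span_mul_pow (hI : IsSplitOfNorm s I A) (hJ : IsSplitOfNorm s J B)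
    {k : ℕ} {z : R} (hz : I * J ^ k = span {z}) : span {A * B ^ k} = span {z * s z} := by
  have hsz : I.map s * J.map s ^ k = span {s z} := by
    rw [← Ideal.map_pow, ← Ideal.map_mul, hz, map_span, Set.image_singleton]
  rw [← span_singleton_mul_span_singleton, ← span_singleton_mul_span_singleton, ← hz, ← hsz,
    ← span_singleton_pow, ← hI.mul_map, ← hJ.mul_map, mul_pow]
  exact mul_mul_mul_comm ..

end CommRing

section Dedekind

variable {R : Type*} [CommRing R] [IsDedekindDomain R] {s : R →+* R} {A : R}

lemma exists_isSplitOfNorm_pow_eq_span {n : ℕ} (hn : n ≠ 0) {β : R} (hβ : IsCoprime β (s β))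
    (hnorm : β * s β = A ^ n) : ∃ I : Ideal R, IsSplitOfNorm s I A ∧ I ^ n = span {β} := by
  have hcop : IsCoprime (span {β}) (span {s β}) := (isCoprime_span_singleton_iff β (s β)).mpr hβ
  have hmul : span {β} * span {s β} = span {A} ^ n := by
    rw [span_singleton_mul_span_singleton, hnorm, span_singleton_pow]
  obtain ⟨I, hI⟩ := exists_eq_pow_of_mul_eq_pow_of_coprime hcop hmul
  have hmapI : span {s β} = I.map s ^ n := by
    rw [← Ideal.map_pow, ← hI, map_span, Set.image_singleton]
  rw [hI, hmapI] at hcop hmul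
  rw [← mul_pow] at hmul
  exact ⟨I, ⟨(IsCoprime.pow_iff hn.bot_lt hn.bot_lt).mp hcop, pow_left_injective hn hmul⟩, hI.symm⟩

lemma exists_isSplitOfNorm_mk0_pow_eq_one {n : ℕ} (hn : n ≠ 0) (hA : A ≠ 0) {β : R}
    (hβ : IsCoprime β (s β)) (hnorm : β * s β = A ^ n) :
    ∃ I : (Ideal R)⁰, IsSplitOfNorm s (I : Ideal R) A ∧ ClassGroup.mk0 I ^ n = 1 := by
  obtain ⟨I, hI, hpow⟩ := exists_isSplitOfNorm_pow_eq_span hn hβ hnorm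
  refine ⟨⟨I, mem_nonZeroDivisors_of_ne_zero (hI.ne_bot hA)⟩, hI, ?_⟩
  rw [← map_pow, ClassGroup.mk0_eq_one_iff, SubmonoidClass.coe_pow, hpow]
  exact ⟨β, rfl⟩

lemma IsSplitOfNorm.mk0_map_eq_inv {I J : (Ideal R)⁰} (hI : IsSplitOfNorm s (I : Ideal R) A)
    (hJ : (J : Ideal R) = (I : Ideal R).map s) (hA : A ≠ 0) :
    ClassGroup.mk0 J = (ClassGroup.mk0 I)⁻¹ :=
  ClassGroup.mk0_eq_mk0_inv_iff.mpr ⟨A, hA, by rw [hJ, mul_comm, hI.mul_map]⟩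

lemma natAbs_eq_of_span_intCast_eq [Module.Free ℤ R] [Module.Finite ℤ R]
    {m n : ℤ} (h : span {(m : R)} = span {(n : R)}) : m.natAbs = n.natAbs := by
  have absNorm_span (k : ℤ) :
      absNorm (span {(k : R)}) = k.natAbs ^ Module.finrank ℤ R := by
    rw [absNorm_span_singleton, ← eq_intCast (algebraMap ℤ R), Algebra.norm_algebraMap,
      Int.natAbs_pow]
  have hpow := congrArg absNorm h
  rw [absNorm_span, absNorm_span] at hpow
  exact Nat.pow_left_injective (Module.finrank_pos (R := ℤ) (M := R)).ne' hpow

end Dedekind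

section RingOfIntegers

variable {K : Type*} [Field K] [NumberField K] {α : K} {D : ℤ} {σ : K →ₐ[ℚ] K}

lemma IsSplitOfNorm.eq_pow_of_isPrincipal (hD : 0 < D) (hsf : Squarefree D)
    (hα : α ^ 2 = -(D : K)) (hgen : Algebra.adjoin ℚ {α} = ⊤) (hσ : σ α = -α)
    {I J : Ideal (𝓞 K)} {A B : ℤ} (hA : 0 ≤ A) (hB : 0 ≤ B)
    (hI : IsSplitOfNorm (mapRingHom σ) I (A : 𝓞 K))
    (hJ : IsSplitOfNorm (mapRingHom σ) J (B : 𝓞 K)) {k : ℕ}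
    (hle : 4 * (A * B ^ k) ≤ D) (hIJ : (I * J ^ k).IsPrincipal) : A = B ^ k := by
  obtain ⟨z, hz : I * J ^ k = span {z}⟩ := hIJ
  obtain ⟨N, hN_nonneg, hN, hfix⟩ :=
    exists_nonneg_mul_conj_eq hD hsf hα hgen hσ z.isIntegral_coe
  have hzN : z * mapRingHom σ z = (N : 𝓞 K) := RingOfIntegers.ext <| by
    simpa [RingOfIntegers.mapRingHom_apply] using hN
  have hN_eq : N = A * B ^ k := by
    have hspan := hI.span_mul_pow hJ hz
    rw [hzN] at hspan
    have habs := natAbs_eq_of_span_intCast_eq (m := A * B ^ k) (n := N) (by exact_mod_cast hspan)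
    have : 0 ≤ A * B ^ k := by positivity
    omega
  have hzfix : mapRingHom σ z = z := RingOfIntegers.ext (hfix (hN_eq ▸ hle))
  have hspan := hI.span_eq_span_pow hJ hz hzfix
  have habs := natAbs_eq_of_span_intCast_eq (m := A) (n := B ^ k) (by exact_mod_cast hspan)
  have : 0 ≤ B ^ k := by positivity
  omega

lemma IsSplitOfNorm.mk0_mul_zpow_ne_one (hD : 0 < D) (hsf : Squarefree D)
    (hα : α ^ 2 = -(D : K)) (hgen : Algebra.adjoin ℚ {α} = ⊤) (hσ : σ α = -α)
    {I J : (Ideal (𝓞 K))⁰} {A B : ℤ} (hA : 0 ≤ A) (hB : 0 < B)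
    (hI : IsSplitOfNorm (mapRingHom σ) (I : Ideal (𝓞 K)) (A : 𝓞 K))
    (hJ : IsSplitOfNorm (mapRingHom σ) (J : Ideal (𝓞 K)) (B : 𝓞 K)) {k : ℤ}
    (hle : 4 * (A * B ^ k.natAbs) ≤ D) (hne : A ≠ B ^ k.natAbs) :
    ClassGroup.mk0 I * ClassGroup.mk0 J ^ k ≠ 1 := by
  have hB_ne : (B : 𝓞 K) ≠ 0 := Int.cast_ne_zero.mpr hB.ne'
  have hss : (mapRingHom (σ : K →+* K)).comp (mapRingHom σ) = RingHom.id (𝓞 K) :=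
    RingHom.ext fun z ↦ RingOfIntegers.ext <|
      DFunLike.congr_fun (comp_self_eq_id_of_apply_eq_neg hgen hσ) (z : K)
  let J' : (Ideal (𝓞 K))⁰ :=
    ⟨_, mem_nonZeroDivisors_of_ne_zero ((hJ.map hss).ne_bot hB_ne)⟩
  intro h
  obtain ⟨n, rfl | rfl⟩ := k.eq_nat_or_neg
  · rw [Int.natAbs_natCast] at hle hne
    rw [zpow_natCast, ← map_pow, ← map_mul, ClassGroup.mk0_eq_one_iff] at h
    exact hne (hI.eq_pow_of_isPrincipal hD hsf hα hgen hσ hA hB.le hJ hle h)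
  · rw [Int.natAbs_neg, Int.natAbs_natCast] at hle hne
    rw [zpow_neg, ← inv_zpow, ← hJ.mk0_map_eq_inv (J := J') rfl hB_ne, zpow_natCast, ← map_pow,
      ← map_mul, ClassGroup.mk0_eq_one_iff] at h
    exact hne (hI.eq_pow_of_isPrincipal hD hsf hα hgen hσ hA hB.le (hJ.map hss) hle h)

lemma exists_add_conj_eq_mul_conj_eq (hα : α ^ 2 = -(D : K)) (hσ : σ α = -α) {x M : ℤ}
    (hx : x ^ 2 + D = 4 * M) :
    ∃ β : 𝓞 K, β + mapRingHom (σ : K →+* K) β = x ∧ β * mapRingHom (σ : K →+* K) β = M := by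
  have hxK : (x : K) ^ 2 + D = 4 * M := by exact_mod_cast hx
  have hint : IsIntegral ℤ ((x + α) / 2) := by
    open Polynomial in
    refine ⟨X ^ 2 - C x * X + C M, by monicity!, ?_⟩
    simp only [eval₂_add, eval₂_sub, eval₂_mul, eval₂_C, eval₂_pow, eval₂_X]
    simp only [eq_intCast]
    linear_combination (1 / 4 : K) * hα - (1 / 4 : K) * hxK
  have hconj : σ ((x + α) / 2) = (x - α) / 2 := by
    rw [map_div₀, map_add, hσ, map_intCast, map_ofNat, sub_eq_add_neg]
  refine ⟨⟨_, hint⟩, RingOfIntegers.ext ?_, RingOfIntegers.ext ?_⟩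
  · change (x + α) / 2 + σ ((x + α) / 2) = algebraMap (𝓞 K) K x
    rw [hconj, map_intCast]
    ring
  · change (x + α) / 2 * σ ((x + α) / 2) = algebraMap (𝓞 K) K M
    rw [hconj, map_intCast]
    linear_combination (-1 / 4 : K) * hα + (1 / 4 : K) * hxK

lemma isRelPrime_of_squarefree_of_sq_add_eq_mul_pow {R : Type*} [CommRing R] {d c x a : R} {n : ℕ}
    (hd : Squarefree d) (hn : 2 ≤ n) (h : x ^ 2 + d = c * a ^ n) : IsRelPrime x a := by
  intro r hrx hra
  apply hd r
  rw [← sq, ← dvd_add_right (pow_dvd_pow_of_dvd hrx 2), h]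
  exact ((pow_dvd_pow_of_dvd hra 2).trans (pow_dvd_pow a hn)).mul_left c

lemma exists_isSplitOfNorm_of_sq_add_eq (hsf : Squarefree D) (hα : α ^ 2 = -(D : K))
    (hσ : σ α = -α) {n : ℕ} (hn : 2 ≤ n) {x A : ℤ} (hA : A ≠ 0) (hx : x ^ 2 + D = 4 * A ^ n) :
    ∃ I : (Ideal (𝓞 K))⁰,
      IsSplitOfNorm (mapRingHom σ) (I : Ideal (𝓞 K)) (A : 𝓞 K) ∧
        ClassGroup.mk0 I ^ n = 1 := by
  obtain ⟨β, hadd, hmul⟩ := exists_add_conj_eq_mul_conj_eq hα hσ hx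
  have hxA : IsCoprime x (A ^ n) :=
    (isRelPrime_of_squarefree_of_sq_add_eq_mul_pow hsf hn hx).isCoprime.pow_right
  have hβ : IsCoprime β (mapRingHom σ β) := by
    have h := hxA.map (Int.castRingHom (𝓞 K))
    rw [eq_intCast, eq_intCast, ← hadd, ← hmul] at h
    exact .symm (.of_mul_add_left_left (z := 1) (by rw [mul_one]; exact h.of_mul_right_left))
  exact exists_isSplitOfNorm_mk0_pow_eq_one (by omega) (Int.cast_ne_zero.mpr hA) hβ
    (by rw [hmul, Int.cast_pow])

end RingOfIntegers
end Ideals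

theorem exists_subgroup_classGroup_mulEquiv_zmod_prod {p : ℕ} (hp : p.Prime) {x y A B D : ℤ}
    (hsf : Squarefree D) (hx : x ^ 2 + D = 4 * A ^ p) (hy : y ^ 2 + D = 4 * B ^ p)
    (hA : 0 < A) (hB : 0 < B) (hle : 4 * (A * B ^ (p / 2)) ≤ D) (hne : ∀ k ≤ p / 2, A ≠ B ^ k)
    {K : Type*} [Field K] [NumberField K] {α : K} (hα : α ^ 2 = -(D : K))
    (hgen : Algebra.adjoin ℚ {α} = ⊤) :
    ∃ H : Subgroup (ClassGroup (𝓞 K)), Nonempty (H ≃* Multiplicative (ZMod p × ZMod p)) := by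
  have hle_pow (k : ℕ) (hk : k ≤ p / 2) : 4 * (A * B ^ k) ≤ D :=
    hle.trans' (by gcongr)
  have hD : 0 < D := lt_of_lt_of_le (by positivity) (hle_pow 0 (Nat.zero_le _))
  have h4B : 4 * B ≤ D := by
    have := hle_pow 1 (Nat.div_pos hp.two_le two_pos)
    nlinarith
  have hB_ne : B ≠ 1 := by
    rintro rfl
    have hA_ne : A ≠ 1 := hne 0 (Nat.zero_le _)
    have hD_le : D ≤ 4 := by nlinarith [sq_nonneg y, one_pow (M := ℤ) p]
    have := hle_pow 0 (Nat.zero_le _)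
    omega
  have hsq_ne (r : ℚ) : r ^ 2 ≠ -D := by
    have : (0 : ℚ) < D := by exact_mod_cast hD
    nlinarith [sq_nonneg r]
  obtain ⟨σ, hσ⟩ := exists_algHom_apply_eq_neg hsq_ne (by simpa using hα) hgen
  obtain ⟨I, hI, hIp⟩ := exists_isSplitOfNorm_of_sq_add_eq hsf hα hσ hp.two_le hA.ne' hx
  obtain ⟨J, hJ, hJp⟩ := exists_isSplitOfNorm_of_sq_add_eq hsf hα hσ hp.two_le hB.ne' hy
  refine exists_subgroup_mulEquiv_zmod_prod hp hIp hJp ?_ fun k hk ↦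
    hI.mk0_mul_zpow_ne_one hD hsf hα hgen hσ hA.le hB hJ (hle_pow _ hk) (hne _ hk)
  simpa using hJ.mk0_mul_zpow_ne_one hD hsf hα hgen hσ hB.le hB hJ (k := 0) (by simpa using h4B)
    (by simpa using hB_ne)

section Polynomials

variable (p : ℕ) (q a b : ℤ)

lemma gPoly_eq_geom_sum₂ : gPoly p a b = ∑ i ∈ Finset.range p, b ^ i * a ^ (p - 1 - i) :=
  Finset.sum_congr rfl fun _ _ ↦ mul_comm _ _

lemma sub_mul_gPoly : (a - b) * gPoly p a b = a ^ p - b ^ p := by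
  rw [gPoly_eq_geom_sum₂]
  linear_combination -(Commute.all b a).mul_geom_sum₂ p

lemma gPoly_self : gPoly p a a = p * a ^ (p - 1) := by
  rw [gPoly_eq_geom_sum₂, geom_sum₂_self]

lemma sq_add_gPoly_add_fPoly :
    ((a - b) * q ^ p + gPoly p a b) ^ 2 + fPoly p q a b = 4 * (a * q) ^ p := by
  rw [fPoly, mul_pow, pow_mul']
  linear_combination 2 * q ^ p * sub_mul_gPoly p a b

lemma sq_sub_gPoly_add_fPoly :
    ((a - b) * q ^ p - gPoly p a b) ^ 2 + fPoly p q a b = 4 * (b * q) ^ p := by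
  rw [fPoly, mul_pow, pow_mul']
  linear_combination -2 * q ^ p * sub_mul_gPoly p a b

variable {p q a b}

lemma sq_dvd_fPoly_self (hp : 2 ≤ p) : a ^ 2 ∣ fPoly p q a a := by
  have hdvd_pow : a ^ 2 ∣ a ^ p := pow_dvd_pow a hp
  have hdvd_gPoly : a ∣ gPoly p a a := gPoly_self p a ▸ (dvd_pow_self a (by omega)).mul_left _
  rw [fPoly, sub_self, zero_pow two_ne_zero, zero_mul, sub_zero]
  exact dvd_sub (((dvd_add hdvd_pow hdvd_pow).mul_left 2).mul_right _)
    (pow_dvd_pow_of_dvd hdvd_gPoly 2)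

lemma ne_of_squarefree_fPoly (hp : 2 ≤ p) (ha : 1 < a) (hsf : Squarefree (fPoly p q a b)) :
    a ≠ b := by
  rintro rfl
  have := Int.isUnit_iff.mp (hsf a (sq a ▸ sq_dvd_fPoly_self hp))
  omega

end Polynomials

lemma mul_ne_mul_pow_of_lt_sq_mul {q a b : ℤ} (hq : 1 < q) (ha : 0 < a) (hb : 0 < b) (hne : a ≠ b)
    (hlt : a < b ^ 2 * q) (k : ℕ) : a * q ≠ (b * q) ^ k := by
  match k with
  | 0 => rw [pow_zero]; nlinarith
  | 1 => rw [pow_one]; exact fun h ↦ hne (mul_right_cancel₀ (by omega) h)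
  | k + 2 =>
    apply ne_of_lt
    calc a * q < b ^ 2 * q * q := by gcongr
      _ = (b * q) ^ 2 := by ring
      _ ≤ (b * q) ^ (k + 2) := pow_le_pow_right₀ (by nlinarith) (by omega)

theorem stmt_1_general {p : ℕ} (hp : p.Prime) (hp2 : p ≠ 2) {q a b : ℤ} (hq : 1 < q) (ha : 0 < a)
    (hb : 0 < b) (hne : a ≠ b) (hlt : a < b ^ 2 * q) (hsf : Squarefree (fPoly p q a b))
    (hbound : 4 * a * b ^ ((p - 1) / 2) * q ^ ((p + 1) / 2) ≤ fPoly p q a b)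
    {K : Type*} [Field K] [NumberField K] {α : K} (hα : α ^ 2 = -(fPoly p q a b : K))
    (hgen : Algebra.adjoin ℚ {α} = ⊤) :
    ∃ H : Subgroup (ClassGroup (𝓞 K)), Nonempty (H ≃* Multiplicative (ZMod p × ZMod p)) := by
  have hodd := hp.eq_two_or_odd
  have hp_pred : (p - 1) / 2 = p / 2 := by omega
  have hp_succ : (p + 1) / 2 = p / 2 + 1 := by omega
  have hle : 4 * (a * q * (b * q) ^ (p / 2)) ≤ fPoly p q a b := by
    rw [hp_pred, hp_succ] at hbound
    exact hbound.trans_eq' (by ring)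
  exact exists_subgroup_classGroup_mulEquiv_zmod_prod hp hsf (sq_add_gPoly_add_fPoly p q a b)
    (sq_sub_gPoly_add_fPoly p q a b) (by positivity) (by positivity) hle
    (fun k _ ↦ mul_ne_mul_pow_of_lt_sq_mul hq ha hb hne hlt k) hα hgen

section RealBounds

lemma rpow_mul_sub_one_div {x : ℝ} (hx : 0 ≤ x) {n : ℕ} (hn : 1 ≤ n) (r s : ℝ) :
    x ^ (r * (n - 1) / s) = (x ^ (r / s)) ^ (n - 1) := by
  rw [← Real.rpow_natCast, ← Real.rpow_mul hx, Nat.cast_sub hn, Nat.cast_one, mul_div_right_comm]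

lemma two_mul_lt_of_lt_div_mul_pow {p : ℕ} (hp : 1 ≤ p) {t : ℝ} (ht : 0 ≤ t)
    (h : (p : ℝ) < (2 * p ^ 2 - 1) / (2 * p) ^ p * t ^ (p - 1)) : 2 * p < t := by
  by_contra! hle
  have hp_pos : (1 : ℝ) ≤ p := by exact_mod_cast hp
  refine h.not_ge ?_
  calc (2 * p ^ 2 - 1 : ℝ) / (2 * p) ^ p * t ^ (p - 1)
      ≤ (2 * p ^ 2 - 1) / (2 * p) ^ p * (2 * p) ^ (p - 1) := by
        gcongr
        exact div_nonneg (by nlinarith) (by positivity)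
    _ = (2 * p ^ 2 - 1) / (2 * p) := by
        rw [← pow_sub_one_mul (by omega : p ≠ 0) (2 * p : ℝ)]
        field_simp
    _ ≤ p := by
        rw [div_le_iff₀ (by positivity)]
        nlinarith

lemma lt_two_mul_of_lt_add_mul {p : ℕ} (hp : 1 ≤ p) {t a b : ℝ} (ht : 0 ≤ t)
    (ha : a < (1 / (2 * p) + 1 / (2 ^ p * p ^ p)) * t) (hb : 1 / (2 * p) * t < b) :
    a < 2 * b := by
  have hp_pos : (1 : ℝ) ≤ p := by exact_mod_cast hp
  have hle : 1 / (2 ^ p * p ^ p : ℝ) ≤ 1 / (2 * p) := by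
    rw [← mul_pow]
    exact one_div_le_one_div_of_le (by positivity) (le_self_pow₀ (by linarith) (by omega))
  nlinarith

end RealBounds

theorem stmt_1 (p q : ℕ) (hp : p.Prime) (hp5 : 5 ≤ p) (hq : q.Prime) (a b : ℤ)
    (ha1 : (1 / (2 * (p : ℝ))) * (q : ℝ) ^ ((p : ℝ) / ((p : ℝ) - 2)) < (a : ℝ))
    (ha2 : (a : ℝ) < (1 / (2 * (p : ℝ)) + 1 / (2 ^ p * (p : ℝ) ^ p)) *
      (q : ℝ) ^ ((p : ℝ) / ((p : ℝ) - 2)))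
    (hb1 : (1 / (2 * (p : ℝ))) * (q : ℝ) ^ ((p : ℝ) / ((p : ℝ) - 2)) < (b : ℝ))
    (hb2 : (b : ℝ) < (1 / (2 * (p : ℝ)) + 1 / (2 ^ p * (p : ℝ) ^ p)) *
      (q : ℝ) ^ ((p : ℝ) / ((p : ℝ) - 2)))
    (hsf : Squarefree (fPoly p (q : ℤ) a b))
    (hbound : 4 * a * b ^ ((p - 1) / 2) * (q : ℤ) ^ ((p + 1) / 2) ≤ fPoly p (q : ℤ) a b)
    (hbig : (p : ℝ) < ((2 * (p : ℝ) ^ 2 - 1) / (2 * (p : ℝ)) ^ p) *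
      (q : ℝ) ^ (((p : ℝ) * ((p : ℝ) - 1)) / ((p : ℝ) - 2)))
    (K : Type) [Field K] [NumberField K] (α : K)
    (hα : α ^ 2 = -((fPoly p (q : ℤ) a b : ℤ) : K))
    (hgen : Algebra.adjoin ℚ {α} = ⊤) :
    ∃ H : Subgroup (ClassGroup (NumberField.RingOfIntegers K)),
      Nonempty (H ≃* Multiplicative (ZMod p × ZMod p)) := by
  rw [rpow_mul_sub_one_div q.cast_nonneg (by omega)] at hbig
  set t : ℝ := (q : ℝ) ^ ((p : ℝ) / ((p : ℝ) - 2))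
  have ht : 2 * p < t := two_mul_lt_of_lt_div_mul_pow (by omega) (by positivity) hbig
  have one_lt (c : ℤ) (hc : 1 / (2 * (p : ℝ)) * t < c) : 1 < c := by
    have : 1 < 1 / (2 * (p : ℝ)) * t := by
      rwa [one_div_mul_eq_div, one_lt_div (by positivity)]
    exact_mod_cast this.trans hc
  have ha : 1 < a := one_lt a ha1
  have hb : 1 < b := one_lt b hb1
  have hab : a < 2 * b := by
    exact_mod_cast lt_two_mul_of_lt_add_mul (by omega) (by positivity) ha2 hb1
  have hq_two : (2 : ℤ) ≤ q := by exact_mod_cast hq.two_le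
  have hlt : a < b ^ 2 * q := by nlinarith
  exact stmt_1_general hp (by omega) (by omega) (by omega) (by omega)
    (ne_of_squarefree_fPoly (by omega) ha hsf) hlt hsf hbound hα hgen
end

section
/- Let p be an odd prime and let D be a squarefree positive integer with D ≡ 3 (mod 4). Let X, Y be integers with X² − 4Y^p = −D and Y > 0. Let K = ℚ(√−D) with ring of integers 𝓞_K. Then X is odd, (X + √−D)/2 ∈ 𝓞_K, and there exists an ideal 𝔞 of 𝓞_K such that 𝔞^p equals the principal ideal generated by (X + √−D)/2 and the absolute norm of 𝔞 equals Y. -/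
/-!
Put `x = (X + α) / 2`, where `α ^ 2 = d = X ^ 2 - 4 * Y ^ n`. Then `x * (X - x) = Y ^ n`, so `x` is
an algebraic integer of norm `Y ^ n`. If `n ≥ 2`, the square of a common divisor of `X` and `Y`
divides the squarefree number `d`, so `X` and `Y` are coprime. Thus the sum `X` and the product
`Y ^ n` of `x` and `X - x` are coprime, hence so are `x` and `X - x`, and unique factorization of
ideals makes `(x)` an `n`-th power; comparing norms gives the norm of its root.
-/

open NumberField Polynomial

section Squarefree

theorem isRelPrime_of_squarefree_sq_sub_mul_pow {R : Type*} [CommRing R] {a b m : R} {n : ℕ}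
    (hn : 2 ≤ n) (h : Squarefree (a ^ 2 - m * b ^ n)) : IsRelPrime a b := by
  intro q hqa hqb
  refine h q ?_
  rw [← sq]
  exact dvd_sub (pow_dvd_pow_of_dvd hqa 2)
    (((pow_dvd_pow q hn).trans (pow_dvd_pow_of_dvd hqb n)).mul_left m)

theorem odd_of_squarefree_sq_sub_four_mul {a c : ℤ} (h : Squarefree (a ^ 2 - 4 * c)) : Odd a := by
  by_contra ha
  obtain ⟨k, rfl⟩ := Int.not_odd_iff_even.mp ha
  have two_isUnit : IsUnit (2 : ℤ) := h 2 ⟨k ^ 2 - c, by ring⟩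
  exact absurd two_isUnit (by decide)

theorem not_isSquare_of_squarefree_of_ne_one {d : ℤ} (hd : Squarefree d) (hd1 : d ≠ 1) :
    ¬IsSquare d := by
  rintro ⟨r, rfl⟩
  exact hd1 (Int.isUnit_mul_self (hd r dvd_rfl))

end Squarefree

theorem isCoprime_of_isCoprime_add_mul {R : Type*} [CommRing R] {x y : R}
    (h : IsCoprime (x + y) (x * y)) : IsCoprime x y := by
  obtain ⟨u, v, huv⟩ := h
  exact ⟨u + v * y, u, by linear_combination huv⟩

theorem isIntegral_of_mul_sub_self_eq {R A : Type*} [CommRing R] [CommRing A] [Algebra R A]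
    {x : A} {t c : R} (h : x * (algebraMap R A t - x) = algebraMap R A c) : IsIntegral R x := by
  refine ⟨X ^ 2 - C t * X + C c, by monicity!, ?_⟩
  simp only [eval₂_add, eval₂_sub, eval₂_mul, eval₂_pow, eval₂_C, eval₂_X]
  linear_combination -h

section Norm

theorem norm_algebraMap_sub_gen {R S : Type*} [CommRing R] [CommRing S] [Algebra R S]
    (pb : PowerBasis R S) (c : R) :
    Algebra.norm R (algebraMap R S c - pb.gen) = (minpoly R pb.gen).eval c := by
  rw [Algebra.norm_eq_matrix_det pb.basis, map_sub, ← charpoly_leftMulMatrix pb,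
    Matrix.eval_charpoly, AlgHom.commutes, Matrix.algebraMap_eq_diagonal]
  rfl

variable {F L : Type*} [Field F] [Field L] [Algebra F L] {d : F}

theorem minpoly_eq_X_sq_sub_C {θ : L} (hd : ¬IsSquare d) (hθ : θ ^ 2 = algebraMap F L d) :
    minpoly F θ = X ^ 2 - C d := by
  refine (minpoly.eq_of_irreducible_of_monic ?_ (by simp [hθ]) (by monicity!)).symm
  rw [X_pow_sub_C_irreducible_iff_of_prime Nat.prime_two]
  rintro b rfl
  exact hd (IsSquare.sq b)

theorem finrank_eq_two_of_gen_sq_eq (pb : PowerBasis F L) (hd : ¬IsSquare d)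
    (hpb : pb.gen ^ 2 = algebraMap F L d) : Module.finrank F L = 2 := by
  rw [pb.finrank, ← pb.natDegree_minpoly, minpoly_eq_X_sq_sub_C hd hpb, natDegree_X_pow_sub_C]

theorem norm_add_mul_gen_of_gen_sq_eq (pb : PowerBasis F L) (hd : ¬IsSquare d)
    (hpb : pb.gen ^ 2 = algebraMap F L d) (a b : F) :
    Algebra.norm F (algebraMap F L a + algebraMap F L b * pb.gen) = a ^ 2 - d * b ^ 2 := by
  have norm_scalar (c : F) : Algebra.norm F (algebraMap F L c) = c ^ 2 := by
    rw [Algebra.norm_algebraMap, finrank_eq_two_of_gen_sq_eq pb hd hpb]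
  rcases eq_or_ne b 0 with rfl | hb
  · simp [norm_scalar]
  have factor_b : algebraMap F L a + algebraMap F L b * pb.gen =
      algebraMap F L (-b) * (algebraMap F L (-a / b) - pb.gen) := by
    rw [mul_sub, ← map_mul, map_neg, show -b * (-a / b) = a by field_simp]
    ring
  rw [factor_b, map_mul, norm_scalar, norm_algebraMap_sub_gen, minpoly_eq_X_sq_sub_C hd hpb,
    eval_sub, eval_pow, eval_X, eval_C]
  field_simp

end Norm

section DedekindDomain

variable {R : Type*} [CommRing R] [IsDedekindDomain R] {n : ℕ}

theorem exists_ideal_pow_eq_span_singleton {x y c : R} (hxy : IsCoprime x y)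
    (h : x * y = c ^ n) : ∃ I : Ideal R, I ^ n = Ideal.span {x} := by
  obtain ⟨I, hI⟩ := exists_eq_pow_of_mul_eq_pow_of_coprime
    ((Ideal.isCoprime_span_singleton_iff x y).mpr hxy)
    (by rw [Ideal.span_singleton_mul_span_singleton, h, ← Ideal.span_singleton_pow])
  exact ⟨I, hI.symm⟩

theorem absNorm_eq_abs_of_pow_eq_span_singleton [Module.Free ℤ R] [Module.Finite ℤ R]
    (hn : n ≠ 0) {I : Ideal R} {x : R} {c : ℤ} (hI : I ^ n = Ideal.span {x})
    (hx : Algebra.norm ℤ x = c ^ n) : (Ideal.absNorm I : ℤ) = |c| := by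
  have absNorm_pow : Ideal.absNorm I ^ n = c.natAbs ^ n := by
    rw [← map_pow, hI, Ideal.absNorm_span_singleton, hx, Int.natAbs_pow]
  rw [Nat.pow_left_injective hn absNorm_pow, Int.natCast_natAbs]

end DedekindDomain

theorem norm_int_eq_of_coe_eq_add_div_two {K : Type*} [Field K] [NumberField K] {α : K} {a c d : ℤ}
    (hd : ¬IsSquare d) (h : a ^ 2 - 4 * c = d) (hα : α ^ 2 = d)
    (hgen : Algebra.adjoin ℚ {α} = ⊤) {x : 𝓞 K} (hx : (x : K) = (a + α) / 2) :
    Algebra.norm ℤ x = c := by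
  obtain ⟨pb, hpb⟩ : ∃ pb : PowerBasis ℚ K, pb.gen = α :=
    ⟨.ofAdjoinEqTop (Algebra.IsIntegral.isIntegral α) hgen, PowerBasis.ofAdjoinEqTop_gen _ _⟩
  have coe_x : (x : K) = algebraMap ℚ K (a / 2) + algebraMap ℚ K (1 / 2) * α := by
    rw [hx]
    simp only [map_div₀, map_intCast, map_ofNat, map_one]
    ring
  have norm_x : Algebra.norm ℚ (x : K) = (a / 2) ^ 2 - d * (1 / 2) ^ 2 := by
    rw [coe_x, ← hpb]
    exact norm_add_mul_gen_of_gen_sq_eq pb (by rwa [Rat.isSquare_intCast_iff])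
      (by simpa [hpb] using hα) _ _
  rw [← Int.cast_inj (α := ℚ), Algebra.coe_norm_int, norm_x, ← h]
  push_cast
  ring

theorem stmt_4_general {n : ℕ} (hn : n ≠ 0) {d : ℤ} (hd : Squarefree d) (hd1 : d ≠ 1) {X Y : ℤ}
    (h : X ^ 2 - 4 * Y ^ n = d) {K : Type*} [Field K] [NumberField K] {α : K}
    (hα : α ^ 2 = d) (hgen : Algebra.adjoin ℚ {α} = ⊤) :
    Odd X ∧ ∃ x : 𝓞 K, algebraMap (𝓞 K) K x = (X + α) / 2 ∧
      ∃ 𝔞 : Ideal (𝓞 K), 𝔞 ^ n = Ideal.span {x} ∧ (Ideal.absNorm 𝔞 : ℤ) = |Y| := by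
  refine ⟨odd_of_squarefree_sq_sub_four_mul (h ▸ hd), ?_⟩
  have mul_conj : ((X + α) / 2) * (X - (X + α) / 2) = (Y : K) ^ n := by
    have hK : (X : K) ^ 2 - 4 * Y ^ n = d := mod_cast congrArg (Int.cast : ℤ → K) h
    linear_combination (hK - hα) / 4
  have x_integral : IsIntegral ℤ ((X + α) / 2) :=
    isIntegral_of_mul_sub_self_eq (t := X) (c := Y ^ n) (by simpa using mul_conj)
  obtain ⟨x, hx⟩ : ∃ x : 𝓞 K, (x : K) = (X + α) / 2 := ⟨⟨_, x_integral⟩, rfl⟩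
  have x_mul_conj : x * (X - x) = (Y : 𝓞 K) ^ n :=
    RingOfIntegers.coe_injective (by simpa [hx] using mul_conj)
  obtain ⟨I, hI⟩ : ∃ I : Ideal (𝓞 K), I ^ n = Ideal.span {x} := by
    rcases (Nat.one_le_iff_ne_zero.mpr hn).eq_or_lt with rfl | hn2
    · exact ⟨_, pow_one _⟩
    have X_coprime_Y : IsCoprime X Y :=
      (isRelPrime_of_squarefree_sq_sub_mul_pow hn2 (h ▸ hd)).isCoprime
    have x_coprime_conj : IsCoprime x (X - x) := isCoprime_of_isCoprime_add_mul <| by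
      rw [add_sub_cancel, x_mul_conj]
      exact X_coprime_Y.intCast.pow_right
    exact exists_ideal_pow_eq_span_singleton x_coprime_conj x_mul_conj
  have norm_x : Algebra.norm ℤ x = Y ^ n :=
    norm_int_eq_of_coe_eq_add_div_two (not_isSquare_of_squarefree_of_ne_one hd hd1) h hα hgen hx
  exact ⟨x, hx, I, hI, absNorm_eq_abs_of_pow_eq_span_singleton hn hI norm_x⟩

theorem stmt_4 (p : ℕ) (hp : p.Prime) (hodd : Odd p) (D : ℕ) (hD : Squarefree D)
    (hDpos : 0 < D) (hD3 : D % 4 = 3) (X Y : ℤ)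
    (h : X ^ 2 - 4 * Y ^ p = -(D : ℤ)) (hY : 0 < Y)
    (K : Type) [Field K] [NumberField K] (α : K)
    (hα : α ^ 2 = -(D : K)) (hgen : Algebra.adjoin ℚ {α} = ⊤) :
    Odd X ∧
    ∃ x : NumberField.RingOfIntegers K,
      algebraMap (NumberField.RingOfIntegers K) K x = ((X : K) + α) / 2 ∧
      ∃ 𝔞 : Ideal (NumberField.RingOfIntegers K),
        𝔞 ^ p = Ideal.span {x} ∧ (Ideal.absNorm 𝔞 : ℤ) = Y := by
  have hd : Squarefree (-(D : ℤ)) :=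
    (Associated.neg_left (Associated.refl _)).squarefree_iff.mpr (Int.squarefree_natCast.mpr hD)
  simpa only [abs_of_pos hY] using
    stmt_4_general hp.ne_zero hd (by omega) h (by simpa using hα) hgen
end

section
/- Let p ≥ 5 be a prime and let q ≥ 5 be a prime number. Then the two-variable polynomial f_q(X,Y) = 2(X^p + Y^p)q^p − (X − Y)²q^{2p} − (X^{p−1} + X^{p−2}Y + ⋯ + XY^{p−2} + Y^{p−1})² ∈ ℤ[X,Y] is squarefree as an element of ℚ[X,Y]. -/
/-!
Give `X` and `Y` degree one and let `E` be the Euler derivation, which multiplies a form of degree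
`d` by `d`. Write `S = Xⁿ⁻¹ + ⋯ + Yⁿ⁻¹` and `f = 2c(Xⁿ + Yⁿ) - c²(X - Y)² - S²`. If `g` is
irreducible and `g² ∣ f`, then `g` divides `E f - 2(n - 1)f`, in which `S²` cancels: it is a
scalar multiple of `Xⁿ + Yⁿ - c(X - Y)²`, nonzero as `n ≠ 2`. Modulo `g` this turns `f = 0` into
`S² = c²(X - Y)²`, so `S = ±c(X - Y)`; multiplying by `X - Y` gives
`Xⁿ - Yⁿ = ±c(X - Y)² = ±(Xⁿ + Yⁿ)`, so `g` is `X` or `Y` up to a scalar. Neither divides `f`, as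
`f(X, 0) = -(Xⁿ⁻¹ - cX)²` and `f` is symmetric.
-/

open scoped BigOperators
open MvPolynomial

/-- `f_q(X,Y) = 2(X^p + Y^p)q^p − (X−Y)²q^{2p} − (X^{p−1} + X^{p−2}Y + ⋯ + Y^{p−1})²`
as a polynomial in `ℚ[X,Y]`, where `X = X 0` and `Y = X 1`. -/
noncomputable def fMvQ (p q : ℕ) : MvPolynomial (Fin 2) ℚ :=
  2 * (X 0 ^ p + X 1 ^ p) * C (q : ℚ) ^ p - (X 0 - X 1) ^ 2 * C (q : ℚ) ^ (2 * p) -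
    (∑ i ∈ Finset.range p, X 0 ^ (p - 1 - i) * X 1 ^ i) ^ 2

section HeronQuotient

variable {R S : Type*} [CommRing R] [CommRing S]

/-- The common shape of the polynomials `f_q`, which are the case `n = p`, `c = q ^ p`, `x = X`,
`y = Y`. Its product with `(x - y) ^ 2` is Heron's expression for sixteen times the squared area of
a triangle whose squared sides are `x ^ n`, `y ^ n` and `c * (x - y) ^ 2`. -/
def heronQuotient (n : ℕ) (c x y : R) : R :=
  2 * c * (x ^ n + y ^ n) - c ^ 2 * (x - y) ^ 2 -
    (∑ k ∈ Finset.range n, x ^ k * y ^ (n - 1 - k)) ^ 2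

theorem heronQuotient_comm (n : ℕ) (c x y : R) :
    heronQuotient n c x y = heronQuotient n c y x := by
  rw [heronQuotient, heronQuotient, geom_sum₂_comm x y n]
  ring

theorem map_heronQuotient {F : Type*} [FunLike F R S] [RingHomClass F R S] (φ : F) (n : ℕ)
    (c x y : R) : φ (heronQuotient n c x y) = heronQuotient n (φ c) (φ x) (φ y) := by
  simp only [heronQuotient, map_sub, map_add, map_mul, map_pow, map_sum, map_ofNat]

theorem heronQuotient_zero_right {n : ℕ} (hn : n ≠ 0) (c x : R) :
    heronQuotient n c x 0 = -(x ^ (n - 1) - c * x) ^ 2 := by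
  obtain ⟨m, rfl⟩ := Nat.exists_eq_succ_of_ne_zero hn
  have geom_sum_eq : ∑ k ∈ Finset.range (m + 1), x ^ k * 0 ^ (m + 1 - 1 - k) = x ^ m := by
    rw [Nat.add_sub_cancel, geom_sum₂_succ_eq, zero_mul, add_zero]
  rw [heronQuotient, Nat.succ_eq_add_one, geom_sum_eq, zero_pow m.succ_ne_zero, Nat.add_sub_cancel]
  ring

theorem dvd_two_mul_pow_or_of_dvd_heronQuotient {n : ℕ} {c x y g : R} (hg : Prime g)
    (hf : g ∣ heronQuotient n c x y) (hsum : g ∣ x ^ n + y ^ n - c * (x - y) ^ 2) :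
    g ∣ 2 * x ^ n ∨ g ∣ 2 * y ^ n := by
  rw [heronQuotient] at hf
  have hgeom := geom_sum₂_mul x y n
  set s := ∑ k ∈ Finset.range n, x ^ k * y ^ (n - 1 - k)
  have hprod : g ∣ (s + c * (x - y)) * (s - c * (x - y)) := by
    convert dvd_sub (hsum.mul_left (2 * c)) hf using 1
    ring
  refine (hg.dvd_or_dvd hprod).imp (fun hadd ↦ ?_) fun hsub ↦ ?_
  · convert dvd_add hsum (hadd.mul_right (x - y)) using 1
    linear_combination -hgeom
  · convert dvd_sub hsum (hsub.mul_right (x - y)) using 1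
    linear_combination hgeom

end HeronQuotient

theorem dvd_derivation_of_mul_self_dvd {R A : Type*} [CommSemiring R] [CommSemiring A] [Algebra R A]
    (D : Derivation R A A) {a b : A} (h : a * a ∣ b) : a ∣ D b := by
  obtain ⟨k, rfl⟩ := h
  simp only [Derivation.leibniz, smul_eq_mul]
  exact ⟨a * D k + 2 * k * D a, by ring⟩

/-- The Euler derivation `∑ Xᵢ ∂/∂Xᵢ`, encoded by its values on the variables so that there may be
infinitely many of them. -/
noncomputable def eulerDerivation (σ R : Type*) [CommSemiring R] :
    Derivation R (MvPolynomial σ R) (MvPolynomial σ R) :=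
  mkDerivation R X

theorem eulerDerivation_monomial {σ R : Type*} [CommSemiring R] (d : σ →₀ ℕ) (r : R) :
    eulerDerivation σ R (monomial d r) = d.degree • monomial d r := by
  have monomial_mul_X (i : σ) (hi : i ∈ d.support) :
      monomial (d - Finsupp.single i 1) (d i : R) * X i = d i • monomial d 1 := by
    have hle : Finsupp.single i 1 ≤ d := by
      simpa [Nat.one_le_iff_ne_zero] using hi
    rw [X, monomial_mul, tsub_add_cancel_of_le hle, mul_one, ← map_nsmul, nsmul_one]
  rw [eulerDerivation, mkDerivation_monomial, Finsupp.sum]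
  simp only [smul_eq_mul]
  rw [Finset.sum_congr rfl monomial_mul_X, ← Finset.sum_smul, smul_comm, smul_monomial,
    smul_eq_mul, mul_one, Finsupp.degree_apply]

theorem eulerDerivation_of_isHomogeneous {σ R : Type*} [CommSemiring R] {φ : MvPolynomial σ R}
    {n : ℕ} (hφ : φ.IsHomogeneous n) : eulerDerivation σ R φ = n • φ := by
  conv_lhs => rw [φ.as_sum]
  conv_rhs => rw [φ.as_sum]
  rw [map_sum, Finset.smul_sum]
  refine Finset.sum_congr rfl fun d hd ↦ ?_
  rw [eulerDerivation_monomial, hφ.degree_eq_sum_deg_support hd, Finsupp.degree_apply]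

theorem isHomogeneous_geom_sum₂ {σ R : Type*} [CommSemiring R] (i j : σ) (n : ℕ) :
    (∑ k ∈ Finset.range n, X i ^ k * X j ^ (n - 1 - k) : MvPolynomial σ R).IsHomogeneous
      (n - 1) := by
  refine IsHomogeneous.sum _ _ _ fun k hk ↦ ?_
  have hdeg : k + (n - 1 - k) = n - 1 := by have := Finset.mem_range.mp hk; omega
  simpa only [hdeg] using (isHomogeneous_X_pow i k).mul (isHomogeneous_X_pow j (n - 1 - k))

theorem eulerDerivation_heronQuotient {σ R : Type*} [CommRing R] {n : ℕ} (hn : n ≠ 0) (c : R)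
    (i j : σ) :
    eulerDerivation σ R (heronQuotient n (C c) (X i) (X j)) =
      2 * ((n : MvPolynomial σ R) - 1) * heronQuotient n (C c) (X i) (X j) -
        C (2 * (n - 2) * c) * (X i ^ n + X j ^ n - C c * (X i - X j) ^ 2) := by
  have hpow := ((isHomogeneous_X_pow i n).add (isHomogeneous_X_pow j n)).C_mul (2 * c)
  have hsq := (((isHomogeneous_X R i).sub (isHomogeneous_X R j)).pow 2).C_mul (c ^ 2)
  have hgeom := (isHomogeneous_geom_sum₂ (R := R) i j n).pow 2
  simp only [C_mul, C_pow, C_sub, map_ofNat, map_natCast] at hpow hsq ⊢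
  simp only [heronQuotient, map_sub, eulerDerivation_of_isHomogeneous hpow,
    eulerDerivation_of_isHomogeneous hsq, eulerDerivation_of_isHomogeneous hgeom, nsmul_eq_mul,
    Nat.cast_mul, Nat.cast_pred (Nat.pos_of_ne_zero hn)]
  push_cast
  ring

theorem not_X_dvd_heronQuotient {σ R : Type*} [CommRing R] [IsDomain R] {n : ℕ} (hn0 : n ≠ 0)
    (hn2 : n ≠ 2) (c : R) {i j : σ} (hij : i ≠ j) :
    ¬ X j ∣ heronQuotient n (C c) (X i) (X j) := by
  classical
  intro hdvd
  let φ : MvPolynomial σ R →ₐ[R] Polynomial R := aeval (Pi.single i Polynomial.X)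
  have hC : φ (C c) = Polynomial.C c := aeval_C _ c
  have hi : φ (X i) = Polynomial.X := by simp [φ]
  have hj : φ (X j) = 0 := by simp [φ, hij.symm]
  have hzero := map_dvd φ hdvd
  rw [map_heronQuotient, hC, hi, hj, zero_dvd_iff, heronQuotient_zero_right hn0, neg_eq_zero,
    sq_eq_zero_iff, sub_eq_zero] at hzero
  have hn1 : 1 ≠ n - 1 := by omega
  have hcoeff := congrArg (Polynomial.coeff · (n - 1)) hzero
  simp [Polynomial.coeff_X, hn1] at hcoeff

theorem stmt_6_general {σ K : Type*} [Field K] {n : ℕ} {c : K} (h2 : (2 : K) ≠ 0) (hn0 : n ≠ 0)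
    (hn2 : (n : K) ≠ 2) (hc : c ≠ 0) {i j : σ} (hij : i ≠ j) :
    Squarefree (heronQuotient n (C c) (X i) (X j)) := by
  have hn2' : n ≠ 2 := fun h ↦ hn2 (by simp [h])
  have hXj := not_X_dvd_heronQuotient hn0 hn2' c hij
  have hXi := not_X_dvd_heronQuotient hn0 hn2' c hij.symm
  rw [heronQuotient_comm] at hXi
  have hf0 : heronQuotient n (C c) (X i) (X j) ≠ 0 := fun h ↦ hXj (h ▸ dvd_zero _)
  rw [squarefree_iff_irreducible_sq_not_dvd_of_ne_zero hf0]
  intro g hg hgg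
  have hgf := dvd_of_mul_left_dvd hgg
  have dvd_of_dvd_C_mul {r : K} (hr : r ≠ 0) {P : MvPolynomial σ K} : g ∣ C r * P → g ∣ P :=
    ((hr.isUnit.map C).dvd_mul_left).mp
  have hsum : g ∣ X i ^ n + X j ^ n - C c * (X i - X j) ^ 2 := by
    have hE := dvd_derivation_of_mul_self_dvd (eulerDerivation σ K) hgg
    rw [eulerDerivation_heronQuotient hn0, dvd_sub_right (hgf.mul_left _)] at hE
    exact dvd_of_dvd_C_mul (mul_ne_zero (mul_ne_zero h2 (sub_ne_zero.mpr hn2)) hc) hE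
  have not_dvd_two_mul_pow {k : σ} (hk : ¬ X k ∣ heronQuotient n (C c) (X i) (X j)) :
      ¬ g ∣ 2 * X k ^ n := fun h ↦ by
    have hgk : g ∣ X k := hg.prime.dvd_of_dvd_pow (dvd_of_dvd_C_mul h2 (by rwa [map_ofNat]))
    exact hk ((hg.dvd_symm (X_prime (i := k)).irreducible hgk).trans hgf)
  exact (dvd_two_mul_pow_or_of_dvd_heronQuotient hg.prime hgf hsum).elim (not_dvd_two_mul_pow hXi)
    (not_dvd_two_mul_pow hXj)

theorem fMvQ_eq_heronQuotient (p q : ℕ) :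
    fMvQ p q = heronQuotient p (C ((q : ℚ) ^ p)) (X 0) (X 1) := by
  rw [heronQuotient_comm, fMvQ, heronQuotient]
  have geom_sum_eq : ∑ k ∈ Finset.range p, (X 0 : MvPolynomial (Fin 2) ℚ) ^ (p - 1 - k) * X 1 ^ k =
      ∑ k ∈ Finset.range p, X 1 ^ k * X 0 ^ (p - 1 - k) :=
    Finset.sum_congr rfl fun _ _ ↦ mul_comm _ _
  rw [geom_sum_eq, C_pow]
  ring

theorem stmt_6 (p q : ℕ) (hp : p.Prime) (hp5 : 5 ≤ p) (hq : q.Prime) (hq5 : 5 ≤ q) :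
    Squarefree (fMvQ p q) := by
  rw [fMvQ_eq_heronQuotient]
  exact stmt_6_general two_ne_zero hp.ne_zero (by exact_mod_cast (show p ≠ 2 by omega))
    (pow_ne_zero p (Nat.cast_ne_zero.mpr hq.ne_zero)) zero_ne_one
end

section
/- Let p ≥ 5 be a prime and q a positive integer. Let a and b be integers with (1/(2p))·q^{p/(p−2)} < a, b < (1/(2p) + 1/(2^p·p^p))·q^{p/(p−2)} (inequalities of real numbers). Then |g(a,b) − (a−b)q^p| > ((2p² − 1)/(2p)^p)·q^{p(p−1)/(p−2)}, where g(a,b) = Σ_{i=0}^{p−1} a^{p−1−i} b^{i}. In particular, if ((2p² − 1)/(2p)^p)·q^{p(p−1)/(p−2)} ≥ p, then g(a,b) − (a−b)q^p ≠ p and g(a,b) − (a−b)q^p ≠ −p. -/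
open scoped BigOperators

/-!
Put `Q = q ^ (p / (p - 2))`, so that `q ^ p = Q ^ (p - 2)`. Each of the `p` terms of `g(a,b)` is
larger than `(Q / (2p)) ^ (p - 1)`, so `g(a,b)` is larger than `2p² / (2p) ^ p * Q ^ (p - 1)`.
On the other hand, `a` and `b` lie in an interval of length `Q / (2p) ^ p`, so `(a - b) q ^ p` is
smaller than `1 / (2p) ^ p * Q ^ (p - 1)`.
-/

theorem natCast_mul_pow_le_geom_sum₂ {R : Type*} [Semiring R] [PartialOrder R] [IsOrderedRing R]
    {a b c : R} (hc : 0 ≤ c) (hca : c ≤ a) (hcb : c ≤ b) (n : ℕ) :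
    n * c ^ (n - 1) ≤ ∑ i ∈ Finset.range n, a ^ (n - 1 - i) * b ^ i := by
  have term_ge : ∀ i ∈ Finset.range n, c ^ (n - 1) ≤ a ^ (n - 1 - i) * b ^ i := by
    intro i hi
    have hi : i < n := Finset.mem_range.mp hi
    have ha : 0 ≤ a := hc.trans hca
    calc c ^ (n - 1) = c ^ (n - 1 - i) * c ^ i := by rw [← pow_add]; congr 1; lia
      _ ≤ a ^ (n - 1 - i) * b ^ i := by gcongr
  simpa only [Finset.card_range, nsmul_eq_mul] using Finset.card_nsmul_le_sum _ _ _ term_ge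

theorem lt_geom_sum₂_sub_mul_pow {K : Type*} [Field K] [LinearOrder K] [IsStrictOrderedRing K]
    {a b y Q : K} {n : ℕ} (hn : 2 ≤ n) (hy : 0 < y) (hQ : 0 < Q) (ha : Q / y ≤ a) (hb : Q / y ≤ b)
    (hab : a - b < Q / y ^ n) :
    (n * y - 1) / y ^ n * Q ^ (n - 1) <
      (∑ i ∈ Finset.range n, a ^ (n - 1 - i) * b ^ i) - (a - b) * Q ^ (n - 2) := by
  have sum_ge : n * (Q / y) ^ (n - 1) ≤ ∑ i ∈ Finset.range n, a ^ (n - 1 - i) * b ^ i :=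
    natCast_mul_pow_le_geom_sum₂ (by positivity) ha hb n
  have mul_lt : (a - b) * Q ^ (n - 2) < Q / y ^ n * Q ^ (n - 2) := by gcongr
  calc (n * y - 1) / y ^ n * Q ^ (n - 1)
      = n * (Q / y) ^ (n - 1) - Q / y ^ n * Q ^ (n - 2) := by
        obtain ⟨m, rfl⟩ := Nat.exists_eq_add_of_le' hn
        simp only [Nat.add_sub_cancel, Nat.add_succ_sub_one, div_pow]
        field_simp
        ring
    _ < _ := by linarith

theorem rpow_div_natCast_pow {x : ℝ} (hx : 0 ≤ x) (y : ℝ) {n : ℕ} (hn : n ≠ 0) :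
    (x ^ (y / n)) ^ n = x ^ y := by
  rw [← Real.rpow_mul_natCast hx, div_mul_cancel₀ _ (Nat.cast_ne_zero.mpr hn)]

theorem lt_abs_and_ne_of_lt_intCast {R : Type*} [Ring R] [LinearOrder R] [IsStrictOrderedRing R]
    {C : R} {x : ℤ} {n : ℕ} (h : C < x) : C < |(x : R)| ∧ (n ≤ C → x ≠ n ∧ x ≠ -n) := by
  refine ⟨h.trans_le (le_abs_self _), fun hn ↦ ?_⟩
  have n_lt_x : (n : ℤ) < x := mod_cast hn.trans_lt h
  lia

theorem stmt_9_general {p : ℕ} (hp : 3 ≤ p) {q a b : ℝ} (hq : 0 ≤ q)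
    (ha : 1 / (2 * (p : ℝ)) * q ^ ((p : ℝ) / (p - 2)) < a)
    (ha' : a < (1 / (2 * (p : ℝ)) + 1 / (2 ^ p * (p : ℝ) ^ p)) * q ^ ((p : ℝ) / (p - 2)))
    (hb : 1 / (2 * (p : ℝ)) * q ^ ((p : ℝ) / (p - 2)) < b) :
    (2 * (p : ℝ) ^ 2 - 1) / (2 * p) ^ p * q ^ ((p : ℝ) * (p - 1) / (p - 2)) <
      (∑ i ∈ Finset.range p, a ^ (p - 1 - i) * b ^ i) - (a - b) * q ^ p := by
  have cast_sub_two : ((p - 2 : ℕ) : ℝ) = p - 2 := by rw [Nat.cast_sub (by lia), Nat.cast_ofNat]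
  have cast_sub_one : ((p - 1 : ℕ) : ℝ) = p - 1 := Nat.cast_pred (by lia)
  have pow_sub_two : (q ^ ((p : ℝ) / (p - 2))) ^ (p - 2) = q ^ p := by
    rw [← cast_sub_two, rpow_div_natCast_pow hq _ (by lia), Real.rpow_natCast]
  have pow_sub_one : (q ^ ((p : ℝ) / (p - 2))) ^ (p - 1) =
      q ^ ((p : ℝ) * (p - 1) / (p - 2)) := by
    rw [← Real.rpow_mul_natCast hq, cast_sub_one, div_mul_eq_mul_div]
  rw [← pow_sub_one, ← pow_sub_two]
  set Q := q ^ ((p : ℝ) / (p - 2))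
  have hy : (0 : ℝ) < 2 * p := by positivity
  rw [← mul_pow, add_mul, one_div_mul_eq_div, one_div_mul_eq_div] at ha'
  rw [one_div_mul_eq_div] at ha hb
  have hQ : 0 < Q := (div_pos_iff_of_pos_right (pow_pos hy p)).mp (by linarith)
  have hab : a - b < Q / (2 * p) ^ p := by linarith
  rw [show 2 * (p : ℝ) ^ 2 = p * (2 * p) by ring]
  exact lt_geom_sum₂_sub_mul_pow (by lia) hy hQ ha.le hb.le hab

theorem stmt_9 (p q : ℕ) (hp : p.Prime) (hp5 : 5 ≤ p) (hq : 0 < q) (a b : ℤ)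
    (ha1 : (1 / (2 * (p : ℝ))) * (q : ℝ) ^ ((p : ℝ) / ((p : ℝ) - 2)) < (a : ℝ))
    (ha2 : (a : ℝ) < (1 / (2 * (p : ℝ)) + 1 / (2 ^ p * (p : ℝ) ^ p)) *
      (q : ℝ) ^ ((p : ℝ) / ((p : ℝ) - 2)))
    (hb1 : (1 / (2 * (p : ℝ))) * (q : ℝ) ^ ((p : ℝ) / ((p : ℝ) - 2)) < (b : ℝ))
    (hb2 : (b : ℝ) < (1 / (2 * (p : ℝ)) + 1 / (2 ^ p * (p : ℝ) ^ p)) *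
      (q : ℝ) ^ ((p : ℝ) / ((p : ℝ) - 2))) :
    ((2 * (p : ℝ) ^ 2 - 1) / (2 * (p : ℝ)) ^ p) *
        (q : ℝ) ^ (((p : ℝ) * ((p : ℝ) - 1)) / ((p : ℝ) - 2)) <
      |((gPoly p a b - (a - b) * (q : ℤ) ^ p : ℤ) : ℝ)| ∧
    ((p : ℝ) ≤ ((2 * (p : ℝ) ^ 2 - 1) / (2 * (p : ℝ)) ^ p) *
        (q : ℝ) ^ (((p : ℝ) * ((p : ℝ) - 1)) / ((p : ℝ) - 2)) →
      gPoly p a b - (a - b) * (q : ℤ) ^ p ≠ (p : ℤ) ∧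
      gPoly p a b - (a - b) * (q : ℤ) ^ p ≠ -(p : ℤ)) := by
  have bound := stmt_9_general (by lia) q.cast_nonneg ha1 ha2 hb1
  exact lt_abs_and_ne_of_lt_intCast (by simpa only [gPoly, push_cast] using bound)
end

section
/- Let p ≥ 5 be a prime. For every ε > 0 there exists a constant C > 0 such that for every prime number q, the number of quadruples of integers (a₁, b₁, a₂, b₂), all four lying strictly between (1/(2p))·q^{p/(p−2)} and (1/(2p) + 1/(2^p·p^p))·q^{p/(p−2)} (inequalities of real numbers), satisfying f_q(a₁, b₁) = f_q(a₂, b₂), is at most C·q^{2p/(p−2) + ε}. -/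
/-!
Writing `h_a(b) = g(a, b) + (a - b) q ^ p`, the identity `(a - b) g(a, b) = a ^ p - b ^ p` gives
`f_q(a, b) = 4 a ^ p q ^ p - h_a(b) ^ 2`. A collision `f_q(a₁, b₁) = f_q(a₂, b₂)` therefore says
`(h_{a₁}(b₁) - h_{a₂}(b₂)) (h_{a₁}(b₁) + h_{a₂}(b₂)) = 4 (a₁ ^ p - a₂ ^ p) q ^ p`. If `a₁ ≠ a₂`,
the divisor bound leaves `O(q ^ ε)` choices for the two factors, and each choice determines `b₁`
and `b₂` up to `O(1)` possibilities, since `h_a` is a polynomial of degree `p - 1`. If `a₁ = a₂`,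
then `b₁` determines `h_{a₂}(b₂)` up to sign.
-/

open scoped BigOperators

/-- The condition that an integer lies strictly between
`(1/(2p))·q^{p/(p−2)}` and `(1/(2p) + 1/(2^p·p^p))·q^{p/(p−2)}`. -/
def InRange (p q : ℕ) (a : ℤ) : Prop :=
  (1 / (2 * (p : ℝ))) * (q : ℝ) ^ ((p : ℝ) / ((p : ℝ) - 2)) < (a : ℝ) ∧
  (a : ℝ) < (1 / (2 * (p : ℝ)) + 1 / (2 ^ p * (p : ℝ) ^ p)) *
    (q : ℝ) ^ ((p : ℝ) / ((p : ℝ) - 2))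

open Finset

section DivisorBound

theorem natCast_add_one_le_mul_pow {K : Type*} [Field K] [LinearOrder K] [IsStrictOrderedRing K]
    {y : K} (hy : 1 < y) (e : ℕ) : (e : K) + 1 ≤ (1 + (y - 1)⁻¹) * y ^ e := by
  have hy' : 0 < y - 1 := sub_pos.2 hy
  have bernoulli : 1 + e * (y - 1) ≤ y ^ e := one_add_mul_sub_le_pow (by linarith) e
  calc (e : K) + 1 ≤ e + 1 + ((y - 1)⁻¹ + e * (y - 1)) :=
        le_add_of_nonneg_right (add_nonneg (inv_nonneg.2 hy'.le)
          (mul_nonneg e.cast_nonneg hy'.le))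
    _ = (1 + (y - 1)⁻¹) * (1 + e * (y - 1)) := by field_simp; ring
    _ ≤ (1 + (y - 1)⁻¹) * y ^ e := by gcongr

variable {R : Type*} [CommSemiring R] [PartialOrder R] [IsOrderedRing R]

theorem natCast_add_one_le_pow {y : R} (hy : 2 ≤ y) (e : ℕ) : (e : R) + 1 ≤ y ^ e :=
  calc (e : R) + 1 ≤ 2 ^ e := by
        exact_mod_cast Nat.mono_cast (α := R) (Nat.succ_le_of_lt (Nat.lt_two_pow_self (n := e)))
    _ ≤ y ^ e := pow_le_pow_left₀ zero_le_two hy e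

theorem prod_ite_lt_le_pow {M : R} (hM : 1 ≤ M) (B : ℕ) (s : Finset ℕ) :
    ∏ r ∈ s, (if r < B then M else 1) ≤ M ^ B := by
  rw [← prod_filter, prod_const]
  gcongr
  calc #{r ∈ s | r < B} ≤ #(range B) :=
        card_le_card fun r hr ↦ mem_range.2 (mem_filter.1 hr).2
    _ = B := card_range B

theorem prod_primeFactors_rpow_pow_factorization {n : ℕ} (hn : n ≠ 0) (δ : ℝ) :
    ∏ r ∈ n.primeFactors, ((r : ℝ) ^ δ) ^ n.factorization r = (n : ℝ) ^ δ := by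
  calc ∏ r ∈ n.primeFactors, ((r : ℝ) ^ δ) ^ n.factorization r
      = ∏ r ∈ n.primeFactors, ((r : ℝ) ^ n.factorization r) ^ δ :=
        prod_congr rfl fun r _ ↦ Real.rpow_pow_comm r.cast_nonneg δ _
    _ = (∏ r ∈ n.primeFactors, (r : ℝ) ^ n.factorization r) ^ δ :=
        Real.finsetProd_rpow _ _ (fun _ _ ↦ by positivity) δ
    _ = (n : ℝ) ^ δ := by
        congr 1
        exact_mod_cast Nat.prod_factorization_pow_eq_self hn

/-- Only the boundedly many primes `r` with `r ^ δ < 2` have `e + 1 > (r ^ e) ^ δ` for some `e`, and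
each of them costs a factor that does not depend on `e`. -/
theorem exists_card_natDivisors_le_mul_rpow {δ : ℝ} (hδ : 0 < δ) :
    ∃ C : ℝ, 0 < C ∧ ∀ n : ℕ, (#n.divisors : ℝ) ≤ C * (n : ℝ) ^ δ := by
  set M : ℝ := 1 + ((2 : ℝ) ^ δ - 1)⁻¹
  set B : ℕ := ⌈(2 : ℝ) ^ δ⁻¹⌉₊
  have two_rpow : (1 : ℝ) < 2 ^ δ := Real.one_lt_rpow one_lt_two hδ
  have one_le_M : 1 ≤ M := le_add_of_nonneg_right (inv_nonneg.2 (sub_nonneg.2 two_rpow.le))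
  refine ⟨M ^ B, by positivity, fun n ↦ ?_⟩
  rcases eq_or_ne n 0 with rfl | hn
  · simp only [Nat.divisors_zero, card_empty, Nat.cast_zero]
    positivity
  have local_bound : ∀ r ∈ n.primeFactors, (n.factorization r : ℝ) + 1 ≤
      (if r < B then M else 1) * ((r : ℝ) ^ δ) ^ n.factorization r := by
    intro r hr
    have two_le_r : (2 : ℝ) ≤ r := by exact_mod_cast (Nat.prime_of_mem_primeFactors hr).two_le
    split_ifs with small
    · calc (n.factorization r : ℝ) + 1 ≤ M * ((2 : ℝ) ^ δ) ^ n.factorization r :=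
            natCast_add_one_le_mul_pow two_rpow _
        _ ≤ M * ((r : ℝ) ^ δ) ^ n.factorization r := by gcongr
    · have : (2 : ℝ) ^ δ⁻¹ ≤ r := (Nat.le_ceil _).trans (by exact_mod_cast not_lt.1 small)
      rw [one_mul]
      exact natCast_add_one_le_pow
        ((Real.rpow_inv_le_iff_of_pos zero_le_two r.cast_nonneg hδ).1 this) _
  calc (#n.divisors : ℝ) = ∏ r ∈ n.primeFactors, ((n.factorization r : ℝ) + 1) := by
        exact_mod_cast Nat.card_divisors hn
    _ ≤ ∏ r ∈ n.primeFactors,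
          (if r < B then M else 1) * ((r : ℝ) ^ δ) ^ n.factorization r :=
        prod_le_prod (fun _ _ ↦ by positivity) local_bound
    _ = (∏ r ∈ n.primeFactors, if r < B then M else 1) * (n : ℝ) ^ δ := by
        rw [prod_mul_distrib, prod_primeFactors_rpow_pow_factorization hn]
    _ ≤ M ^ B * (n : ℝ) ^ δ := by
        gcongr
        exact prod_ite_lt_le_pow one_le_M B _

theorem card_intDivisors (n : ℤ) : #n.divisors = 2 * #n.natAbs.divisors := by
  simp only [Int.divisors, card_disjUnion, card_map, two_mul]

theorem exists_card_intDivisors_le_mul_rpow {δ : ℝ} (hδ : 0 < δ) :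
    ∃ C : ℝ, 0 < C ∧ ∀ n : ℤ, (#n.divisors : ℝ) ≤ C * |(n : ℝ)| ^ δ := by
  obtain ⟨C, hC, hdiv⟩ := exists_card_natDivisors_le_mul_rpow hδ
  refine ⟨2 * C, by positivity, fun n ↦ ?_⟩
  rw [card_intDivisors, Nat.cast_mul, Nat.cast_two, mul_assoc, ← Int.cast_abs, ← Nat.cast_natAbs]
  exact mul_le_mul_of_nonneg_left (hdiv _) zero_le_two

end DivisorBound

section Fibers

variable {α β R : Type*} [CommRing R] [DecidableEq R]

theorem card_filter_sq_eq_sq_le [NoZeroDivisors R] {φ : α → R} {s : Finset α} {k : ℕ}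
    (hφ : ∀ c, #{x ∈ s | φ x = c} ≤ k) (c : R) :
    #{x ∈ s | φ x ^ 2 = c ^ 2} ≤ 2 * k := by
  classical
  calc #{x ∈ s | φ x ^ 2 = c ^ 2} = #({x ∈ s | φ x = c} ∪ {x ∈ s | φ x = -c}) := by
        simp only [sq_eq_sq_iff_eq_or_eq_neg, filter_or]
    _ ≤ #{x ∈ s | φ x = c} + #{x ∈ s | φ x = -c} := card_union_le _ _
    _ ≤ 2 * k := by linarith [hφ c, hφ (-c)]

/-- The divisor `φ x - ψ y` of `n` determines its cofactor `φ x + ψ y`, hence `φ x` and `ψ y`. -/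
theorem card_filter_sq_sub_sq_eq_le {φ : α → ℤ} {ψ : β → ℤ} {s : Finset α} {t : Finset β} {k l : ℕ}
    (hφ : ∀ c, #{x ∈ s | φ x = c} ≤ k) (hψ : ∀ c, #{y ∈ t | ψ y = c} ≤ l) {n : ℤ} (hn : n ≠ 0) :
    #{z ∈ s ×ˢ t | φ z.1 ^ 2 - ψ z.2 ^ 2 = n} ≤ k * l * #n.divisors := by
  have factor {z : α × β} (hz : φ z.1 ^ 2 - ψ z.2 ^ 2 = n) :
      (φ z.1 - ψ z.2) * (φ z.1 + ψ z.2) = n := by rw [← hz]; ring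
  refine card_le_mul_card_image_of_maps_to (f := fun z ↦ φ z.1 - ψ z.2)
    (fun z hz ↦ Int.mem_divisors.2 ⟨⟨_, (factor (mem_filter.1 hz).2).symm⟩, hn⟩) _ fun d hd ↦ ?_
  obtain ⟨m, rfl⟩ := Int.dvd_of_mem_divisors hd
  calc #{z ∈ {z ∈ s ×ˢ t | φ z.1 ^ 2 - ψ z.2 ^ 2 = d * m} | φ z.1 - ψ z.2 = d}
      ≤ #({x ∈ s | φ x = (m + d) / 2} ×ˢ {y ∈ t | ψ y = (m - d) / 2}) := by
        refine card_le_card fun z hz ↦ ?_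
        simp only [mem_filter, mem_product] at hz ⊢
        obtain ⟨⟨⟨hs, ht⟩, hz⟩, hd⟩ := hz
        have hm : φ z.1 + ψ z.2 = m := mul_left_cancel₀ (left_ne_zero_of_mul hn) (hd ▸ factor hz)
        exact ⟨⟨hs, by lia⟩, ht, by lia⟩
    _ ≤ k * l := by
        rw [card_product]
        exact Nat.mul_le_mul (hφ _) (hψ _)

open Polynomial in
theorem card_filter_eval_eq_le [IsDomain R] {P : R[X]}
    (hP : 0 < P.natDegree) (c : R) (s : Finset R) :
    #{x ∈ s | P.eval x = c} ≤ P.natDegree := by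
  have degree_pos : 0 < P.degree := natDegree_pos_iff_degree_pos.1 hP
  calc #{x ∈ s | P.eval x = c} ≤ #(P - C c).roots.toFinset := by
        refine card_le_card fun x hx ↦ ?_
        rw [Multiset.mem_toFinset, mem_roots_sub_C degree_pos]
        exact (mem_filter.1 hx).2
    _ ≤ (P - C c).roots.card := Multiset.toFinset_card_le _
    _ ≤ P.natDegree := card_roots_sub_C' degree_pos

end Fibers

section SquarePart

variable {p : ℕ}

/-- The quantity `h_a(b) = g(a, b) + (a - b) q ^ p` whose square is the part of `f_q(a, b)` that
depends on `b`; see `fPoly_eq_sub_squarePart_sq`. -/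
def squarePart (p : ℕ) (q a b : ℤ) : ℤ := gPoly p a b + (a - b) * q ^ p

theorem gPoly_mul_sub (p : ℕ) (a b : ℤ) : gPoly p a b * (a - b) = a ^ p - b ^ p := by
  simp only [gPoly, mul_comm (a ^ _)]
  linear_combination -geom_sum₂_mul b a p

theorem fPoly_eq_sub_squarePart_sq (p : ℕ) (q a b : ℤ) :
    fPoly p q a b = 4 * a ^ p * q ^ p - squarePart p q a b ^ 2 := by
  rw [fPoly, squarePart, mul_comm 2 p, pow_mul]
  linear_combination 2 * q ^ p * gPoly_mul_sub p a b

open Polynomial in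
theorem exists_eval_eq_squarePart (hp : 3 ≤ p) (q a : ℤ) :
    ∃ P : ℤ[X], P.natDegree = p - 1 ∧ ∀ b, P.eval b = squarePart p q a b := by
  obtain ⟨n, rfl⟩ : ∃ n, p = n + 1 := ⟨p - 1, by lia⟩
  let R : ℤ[X] := ∑ i ∈ range n, C (a ^ (n - i)) * X ^ i + (C a - X) * C (q ^ (n + 1))
  have degree_R : R.degree < n := by
    rw [← mem_degreeLT]
    have linear_part : ((C a - X) * C (q ^ (n + 1))).degree ≤ 1 := by compute_degree
    exact Submodule.add_mem _
      (Submodule.sum_mem _ fun i hi ↦ mem_degreeLT.2 ((degree_C_mul_X_pow_le i _).trans_lt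
        (by exact_mod_cast mem_range.1 hi)))
      (mem_degreeLT.2 (linear_part.trans_lt (by exact_mod_cast (by lia : 1 < n))))
  refine ⟨X ^ n + R, ?_, fun b ↦ ?_⟩
  · rw [natDegree_add_eq_left_of_degree_lt (by rwa [degree_X_pow]), natDegree_X_pow,
      Nat.add_sub_cancel]
  simp only [R, squarePart, gPoly, eval_add, eval_sub, eval_mul, eval_pow, eval_X, eval_C,
    eval_finsetSum, sum_range_succ, Nat.add_sub_cancel, Nat.sub_self, pow_zero]
  ring

theorem card_filter_squarePart_eq_le (hp : 3 ≤ p) (q a : ℤ) (s : Finset ℤ) (c : ℤ) :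
    #{b ∈ s | squarePart p q a b = c} ≤ p - 1 := by
  obtain ⟨P, natDegree_P, eval_P⟩ := exists_eval_eq_squarePart hp q a
  simpa only [eval_P, natDegree_P] using card_filter_eval_eq_le (P := P) (by lia) c s

end SquarePart

section Collisions

variable {p : ℕ}

/-- The quadruples `(a₁, b₁, a₂, b₂)` in the box `[1, N]⁴` with `f_q(a₁, b₁) = f_q(a₂, b₂)`. -/
noncomputable def collisions (p : ℕ) (q : ℤ) (N : ℕ) : Finset (ℤ × ℤ × ℤ × ℤ) :=
  {t ∈ Icc 1 (N : ℤ) ×ˢ Icc 1 (N : ℤ) ×ˢ Icc 1 (N : ℤ) ×ˢ Icc 1 (N : ℤ) |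
    fPoly p q t.1 t.2.1 = fPoly p q t.2.2.1 t.2.2.2}

theorem mem_collisions {q : ℤ} {N : ℕ} {a₁ b₁ a₂ b₂ : ℤ} :
    (a₁, b₁, a₂, b₂) ∈ collisions p q N ↔
      (a₁ ∈ Icc 1 (N : ℤ) ∧ b₁ ∈ Icc 1 (N : ℤ) ∧ a₂ ∈ Icc 1 (N : ℤ) ∧ b₂ ∈ Icc 1 (N : ℤ)) ∧
        fPoly p q a₁ b₁ = fPoly p q a₂ b₂ := by
  simp only [collisions, mem_filter, mem_product]

theorem collisions_zero (p : ℕ) (q : ℤ) : collisions p q 0 = ∅ := by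
  simp [collisions]

theorem card_collisions_diagonal_le (hp : 3 ≤ p) (q : ℤ) (N : ℕ) :
    #{t ∈ collisions p q N | t.1 = t.2.2.1} ≤ 2 * (p - 1) * N ^ 2 := by
  have card_box : #(Icc 1 (N : ℤ) ×ˢ Icc 1 (N : ℤ)) = N ^ 2 := by simp [sq]
  rw [← card_box]
  refine card_le_mul_card_image_of_maps_to (f := fun t ↦ (t.1, t.2.1)) ?_ _ ?_
  · rintro ⟨a₁, b₁, a₂, b₂⟩ ht
    have ⟨⟨ha₁, hb₁, _⟩, _⟩ := mem_collisions.1 (mem_filter.1 ht).1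
    exact mem_product.2 ⟨ha₁, hb₁⟩
  rintro ⟨a, b⟩ -
  refine le_trans (card_le_card_of_injOn (fun t ↦ t.2.2.2) ?_ ?_)
    (card_filter_sq_eq_sq_le (card_filter_squarePart_eq_le hp q a (Icc 1 (N : ℤ)))
      (squarePart p q a b))
  · rintro ⟨a₁, b₁, a₂, b₂⟩ ht
    simp only [coe_filter, Set.mem_ofPred_eq, mem_filter, mem_collisions, Prod.mk.injEq] at ht ⊢
    obtain ⟨⟨⟨⟨_, _, _, hb₂⟩, collision⟩, rfl⟩, rfl, rfl⟩ := ht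
    rw [fPoly_eq_sub_squarePart_sq, fPoly_eq_sub_squarePart_sq] at collision
    exact ⟨hb₂, by linarith⟩
  · rintro ⟨a₁, b₁, a₂, b₂⟩ ht ⟨a₁', b₁', a₂', b₂'⟩ ht' h
    simp only [coe_filter, Set.mem_ofPred_eq, mem_filter, Prod.mk.injEq] at ht ht' h ⊢
    lia

theorem four_mul_pow_sub_pow_mul_pow_ne_zero (hp : p ≠ 0) {q a₁ a₂ : ℤ} (hq : q ≠ 0)
    (ha₁ : 0 ≤ a₁) (ha₂ : 0 ≤ a₂) (h : a₁ ≠ a₂) : 4 * (a₁ ^ p - a₂ ^ p) * q ^ p ≠ 0 := by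
  have : a₁ ^ p - a₂ ^ p ≠ 0 := sub_ne_zero.2 ((pow_left_inj₀ ha₁ ha₂ hp).not.2 h)
  positivity

theorem card_collisions_offDiagonal_le (hp : 3 ≤ p) {q : ℤ} (hq : q ≠ 0) {N D : ℕ}
    (hD : ∀ a₁ ∈ Icc 1 (N : ℤ), ∀ a₂ ∈ Icc 1 (N : ℤ),
      #(4 * (a₁ ^ p - a₂ ^ p) * q ^ p).divisors ≤ D) :
    #{t ∈ collisions p q N | t.1 ≠ t.2.2.1} ≤ (p - 1) * (p - 1) * D * N ^ 2 := by
  have card_pairs : #(Icc 1 (N : ℤ)).offDiag ≤ N ^ 2 := by simp [offDiag_card, sq]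
  refine (card_le_mul_card_image_of_maps_to (t := (Icc 1 (N : ℤ)).offDiag)
    (f := fun t ↦ (t.1, t.2.2.1)) ?_ _ ?_).trans (Nat.mul_le_mul_left _ card_pairs)
  · rintro ⟨a₁, b₁, a₂, b₂⟩ ht
    obtain ⟨ht, hne⟩ := mem_filter.1 ht
    have ⟨⟨ha₁, _, ha₂, _⟩, _⟩ := mem_collisions.1 ht
    exact mem_offDiag.2 ⟨ha₁, ha₂, hne⟩
  rintro ⟨a₁, a₂⟩ ha
  obtain ⟨ha₁, ha₂, hne⟩ := mem_offDiag.1 ha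
  have hn := four_mul_pow_sub_pow_mul_pow_ne_zero (p := p) (by lia) hq
    (zero_le_one.trans (mem_Icc.1 ha₁).1) (zero_le_one.trans (mem_Icc.1 ha₂).1) hne
  refine le_trans (card_le_card_of_injOn (fun t ↦ (t.2.1, t.2.2.2)) ?_ ?_)
    ((card_filter_sq_sub_sq_eq_le (card_filter_squarePart_eq_le hp q a₁ (Icc 1 (N : ℤ)))
      (card_filter_squarePart_eq_le hp q a₂ (Icc 1 (N : ℤ))) hn).trans
      (Nat.mul_le_mul_left _ (hD a₁ ha₁ a₂ ha₂)))
  · rintro ⟨a₁', b₁, a₂', b₂⟩ ht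
    simp only [coe_filter, Set.mem_ofPred_eq, mem_filter, mem_collisions, Prod.mk.injEq,
      mem_product] at ht ⊢
    obtain ⟨⟨⟨⟨_, hb₁, _, hb₂⟩, collision⟩, _⟩, rfl, rfl⟩ := ht
    rw [fPoly_eq_sub_squarePart_sq, fPoly_eq_sub_squarePart_sq] at collision
    exact ⟨⟨hb₁, hb₂⟩, by linarith⟩
  · rintro ⟨a₁, b₁, a₂, b₂⟩ ht ⟨a₁', b₁', a₂', b₂'⟩ ht' h
    simp only [coe_filter, Set.mem_ofPred_eq, mem_filter, Prod.mk.injEq] at ht ht' h ⊢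
    lia

theorem abs_four_mul_pow_sub_pow_mul_pow_le (hp : p ≠ 0) {N a₁ a₂ q : ℝ} (hq : 0 ≤ q)
    (ha₁ : 0 ≤ a₁) (ha₂ : 0 ≤ a₂) (ha₁N : a₁ ≤ N) (ha₂N : a₂ ≤ N) :
    |4 * (a₁ ^ p - a₂ ^ p) * q ^ p| ≤ (4 * (N * q)) ^ p := by
  have pow_diff : |a₁ ^ p - a₂ ^ p| ≤ N ^ p :=
    abs_sub_le_of_nonneg_of_le (by positivity) (by gcongr) (by positivity) (by gcongr)
  have four_le : (4 : ℝ) ≤ 4 ^ p := le_self_pow₀ (by norm_num) hp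
  calc |4 * (a₁ ^ p - a₂ ^ p) * q ^ p| = 4 * |a₁ ^ p - a₂ ^ p| * q ^ p := by
        rw [abs_mul, abs_mul, abs_of_nonneg (pow_nonneg hq p), abs_of_pos four_pos]
    _ ≤ 4 ^ p * N ^ p * q ^ p := by gcongr
    _ = (4 * (N * q)) ^ p := by ring

theorem exists_card_divisors_pow_sub_pow_le (hp : p ≠ 0) {ε : ℝ} (hε : 0 < ε) :
    ∃ C : ℝ, 0 < C ∧ ∀ N q : ℕ, ∀ a₁ ∈ Icc 1 (N : ℤ), ∀ a₂ ∈ Icc 1 (N : ℤ),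
      (#(4 * (a₁ ^ p - a₂ ^ p) * (q : ℤ) ^ p).divisors : ℝ) ≤ C * (N * q : ℝ) ^ ε := by
  obtain ⟨C, hC, hdiv⟩ := exists_card_intDivisors_le_mul_rpow (δ := ε / p) (by positivity)
  refine ⟨C * 4 ^ ε, by positivity, fun N q a₁ ha₁ a₂ ha₂ ↦ ?_⟩
  obtain ⟨one_le_a₁, a₁_le⟩ := mem_Icc.1 ha₁
  obtain ⟨one_le_a₂, a₂_le⟩ := mem_Icc.1 ha₂
  have abs_le : |((4 * (a₁ ^ p - a₂ ^ p) * (q : ℤ) ^ p : ℤ) : ℝ)| ≤ (4 * (N * q : ℝ)) ^ p := by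
    push_cast
    exact abs_four_mul_pow_sub_pow_mul_pow_le hp q.cast_nonneg
      (by exact_mod_cast zero_le_one.trans one_le_a₁)
      (by exact_mod_cast zero_le_one.trans one_le_a₂)
      (by exact_mod_cast a₁_le) (by exact_mod_cast a₂_le)
  calc (#(4 * (a₁ ^ p - a₂ ^ p) * (q : ℤ) ^ p).divisors : ℝ)
      ≤ C * |((4 * (a₁ ^ p - a₂ ^ p) * (q : ℤ) ^ p : ℤ) : ℝ)| ^ (ε / p) := hdiv _
    _ ≤ C * ((4 * (N * q : ℝ)) ^ p) ^ (ε / p) := by gcongr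
    _ = C * (4 * (N * q : ℝ)) ^ ε := by
        rw [← Real.rpow_natCast, ← Real.rpow_mul (by positivity), mul_div_cancel₀]
        exact_mod_cast hp
    _ = C * 4 ^ ε * (N * q : ℝ) ^ ε := by
        rw [Real.mul_rpow zero_le_four (by positivity), mul_assoc]

theorem exists_card_collisions_le (hp : 3 ≤ p) {ε : ℝ} (hε : 0 < ε) :
    ∃ C : ℝ, 0 < C ∧ ∀ N q : ℕ, 0 < N → 0 < q →
      (#(collisions p q N) : ℝ) ≤ C * N ^ 2 * (N * q : ℝ) ^ ε := by
  obtain ⟨C, hC, hdiv⟩ := exists_card_divisors_pow_sub_pow_le (p := p) (by lia) hε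
  refine ⟨2 * p + p * p * C, by positivity, fun N q hN hq ↦ ?_⟩
  set E : ℝ := (N * q : ℝ) ^ ε
  have one_le_E : 1 ≤ E :=
    Real.one_le_rpow (by exact_mod_cast (Nat.mul_pos hN hq : 1 ≤ N * q)) hε.le
  have diagonal : (#{t ∈ collisions p q N | t.1 = t.2.2.1} : ℝ) ≤ 2 * p * N ^ 2 := by
    have := (card_collisions_diagonal_le hp q N).trans
      (Nat.mul_le_mul_right _ (Nat.mul_le_mul_left 2 p.pred_le))
    exact_mod_cast this
  have offDiagonal :
      (#{t ∈ collisions p q N | t.1 ≠ t.2.2.1} : ℝ) ≤ p * p * (C * E) * N ^ 2 := by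
    have := card_collisions_offDiagonal_le hp (by exact_mod_cast hq.ne') (D := ⌊C * E⌋₊)
      fun a₁ ha₁ a₂ ha₂ ↦ Nat.le_floor (hdiv N q a₁ ha₁ a₂ ha₂)
    calc (#{t ∈ collisions p q N | t.1 ≠ t.2.2.1} : ℝ)
        ≤ ((p - 1 : ℕ) : ℝ) * (p - 1 : ℕ) * ⌊C * E⌋₊ * N ^ 2 := by exact_mod_cast this
      _ ≤ p * p * (C * E) * N ^ 2 := by
          gcongr
          · exact p.pred_le
          · exact p.pred_le
          · exact Nat.floor_le (by positivity)
  calc (#(collisions p q N) : ℝ)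
      = #{t ∈ collisions p q N | t.1 = t.2.2.1} + #{t ∈ collisions p q N | t.1 ≠ t.2.2.1} := by
        exact_mod_cast (card_filter_add_card_filter_not _).symm
    _ ≤ 2 * p * N ^ 2 * E + p * p * (C * E) * N ^ 2 :=
        add_le_add (diagonal.trans (le_mul_of_one_le_right (by positivity) one_le_E)) offDiagonal
    _ = (2 * p + p * p * C) * N ^ 2 * E := by ring

theorem InRange.mem_Icc (hp : p ≠ 0) {q : ℕ} {a : ℤ} (h : InRange p q a) :
    a ∈ Icc 1 (⌊(q : ℝ) ^ ((p : ℝ) / (p - 2))⌋₊ : ℤ) := by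
  obtain ⟨lower, upper⟩ := h
  set Q : ℝ := (q : ℝ) ^ ((p : ℝ) / (p - 2))
  have hQ : 0 ≤ Q := by positivity
  have a_pos : (0 : ℝ) < a := lower.trans_le' (by positivity)
  have coeff_le_half : 1 / (2 * (p : ℝ)) ≤ 1 / 2 := by
    have : (1 : ℝ) ≤ p := by exact_mod_cast Nat.one_le_iff_ne_zero.2 hp
    exact one_div_le_one_div_of_le two_pos (by linarith)
  have width_le_half : 1 / (2 ^ p * (p : ℝ) ^ p) ≤ 1 / 2 := by
    rw [← mul_pow, ← one_div_pow]
    exact (pow_le_of_le_one (by positivity) (by linarith) hp).trans coeff_le_half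
  have a_le : (a : ℝ) ≤ Q :=
    upper.le.trans (mul_le_of_le_one_left hQ (by linarith))
  rw [Finset.mem_Icc, Int.natCast_floor_eq_floor hQ]
  exact ⟨by exact_mod_cast a_pos, Int.le_floor.2 a_le⟩

theorem ncard_inRange_collisions_le (hp : p ≠ 0) (q : ℕ) :
    {t : ℤ × ℤ × ℤ × ℤ | InRange p q t.1 ∧ InRange p q t.2.1 ∧
        InRange p q t.2.2.1 ∧ InRange p q t.2.2.2 ∧
        fPoly p (q : ℤ) t.1 t.2.1 = fPoly p (q : ℤ) t.2.2.1 t.2.2.2}.ncard ≤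
      #(collisions p q ⌊(q : ℝ) ^ ((p : ℝ) / (p - 2))⌋₊) := by
  rw [← Set.ncard_coe_finset]
  refine Set.ncard_le_ncard ?_ (finite_toSet _)
  rintro ⟨a₁, b₁, a₂, b₂⟩ ⟨ha₁, hb₁, ha₂, hb₂, collision⟩
  exact mem_coe.2 (mem_collisions.2
    ⟨⟨ha₁.mem_Icc hp, hb₁.mem_Icc hp, ha₂.mem_Icc hp, hb₂.mem_Icc hp⟩, collision⟩)

theorem floor_rpow_sq_mul_rpow_le {q : ℕ} (hq : 0 < q) {α ε : ℝ} (hα : 0 ≤ α) (hε : 0 ≤ ε) :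
    (⌊(q : ℝ) ^ α⌋₊ : ℝ) ^ 2 * (⌊(q : ℝ) ^ α⌋₊ * q : ℝ) ^ (ε / (α + 1)) ≤
      (q : ℝ) ^ (2 * α + ε) := by
  have q_pos : (0 : ℝ) < q := by exact_mod_cast hq
  have floor_le : (⌊(q : ℝ) ^ α⌋₊ : ℝ) ≤ (q : ℝ) ^ α := Nat.floor_le (by positivity)
  calc (⌊(q : ℝ) ^ α⌋₊ : ℝ) ^ 2 * (⌊(q : ℝ) ^ α⌋₊ * q : ℝ) ^ (ε / (α + 1))
      ≤ ((q : ℝ) ^ α) ^ 2 * ((q : ℝ) ^ α * q) ^ (ε / (α + 1)) := by gcongr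
    _ = (q : ℝ) ^ (2 * α) * (q : ℝ) ^ ε := by
        rw [← Real.rpow_add_one q_pos.ne', ← Real.rpow_mul q_pos.le,
          mul_div_cancel₀ ε (by positivity), ← Real.rpow_mul_natCast q_pos.le, mul_comm α]
        norm_cast
    _ = (q : ℝ) ^ (2 * α + ε) := (Real.rpow_add q_pos _ _).symm

end Collisions

theorem stmt_12_general (p : ℕ) (hp : 3 ≤ p) (ε : ℝ) (hε : 0 < ε) :
    ∃ C : ℝ, 0 < C ∧ ∀ q : ℕ,
      ({t : ℤ × ℤ × ℤ × ℤ | InRange p q t.1 ∧ InRange p q t.2.1 ∧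
          InRange p q t.2.2.1 ∧ InRange p q t.2.2.2 ∧
          fPoly p (q : ℤ) t.1 t.2.1 = fPoly p (q : ℤ) t.2.2.1 t.2.2.2}.ncard : ℝ) ≤
        C * (q : ℝ) ^ ((2 * (p : ℝ)) / ((p : ℝ) - 2) + ε) := by
  set α : ℝ := (p : ℝ) / (p - 2) with α_def
  have α_pos : 0 < α := div_pos (by positivity) (sub_pos.2 (by exact_mod_cast hp))
  have hp₀ : p ≠ 0 := by lia
  obtain ⟨C, hC, hcoll⟩ := exists_card_collisions_le hp (ε := ε / (α + 1)) (by positivity)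
  refine ⟨C, hC, fun q ↦ ?_⟩
  refine le_trans (Nat.cast_le.2 (ncard_inRange_collisions_le hp₀ q)) ?_
  rw [← α_def]
  set N := ⌊(q : ℝ) ^ α⌋₊
  rcases q.eq_zero_or_pos with rfl | hq
  · have N_eq : N = 0 := by
      simp only [N, Nat.cast_zero, Real.zero_rpow α_pos.ne', Nat.floor_zero]
    rw [N_eq, collisions_zero, card_empty, Nat.cast_zero]
    positivity
  have N_pos : 0 < N :=
    Nat.floor_pos.2 (Real.one_le_rpow (by exact_mod_cast hq) α_pos.le)
  calc (#(collisions p q N) : ℝ)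
      ≤ C * (N ^ 2 * (N * q : ℝ) ^ (ε / (α + 1))) := by
        simpa only [mul_assoc] using hcoll N q N_pos hq
    _ ≤ C * (q : ℝ) ^ (2 * α + ε) := by
        gcongr
        exact floor_rpow_sq_mul_rpow_le hq α_pos.le hε.le
    _ = C * (q : ℝ) ^ (2 * (p : ℝ) / (p - 2) + ε) := by rw [α_def, mul_div_assoc]

theorem stmt_12 (p : ℕ) (hp : p.Prime) (hp5 : 5 ≤ p) (ε : ℝ) (hε : 0 < ε) :
    ∃ C : ℝ, 0 < C ∧ ∀ q : ℕ, q.Prime →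
      ({t : ℤ × ℤ × ℤ × ℤ | InRange p q t.1 ∧ InRange p q t.2.1 ∧
          InRange p q t.2.2.1 ∧ InRange p q t.2.2.2 ∧
          fPoly p (q : ℤ) t.1 t.2.1 = fPoly p (q : ℤ) t.2.2.1 t.2.2.2}.ncard : ℝ) ≤
        C * (q : ℝ) ^ ((2 * (p : ℝ)) / ((p : ℝ) - 2) + ε) := by
  obtain ⟨C, hC, h⟩ := stmt_12_general p (by lia) ε hε
  exact ⟨C, hC, fun q _ ↦ h q⟩
end

section
/- Let p ≥ 5 be a prime and q a positive integer. Let a and b be integers with (1/(2p))·q^{p/(p−2)} < a, b < (1/(2p) + 1/(2^p·p^p))·q^{p/(p−2)} (inequalities of real numbers). Then f_q(a,b) > 0, where f_q(a,b) = 2(a^p + b^p)q^p − (a−b)²q^{2p} − g(a,b)² and g(a,b) = Σ_{i=0}^{p−1} a^{p−1−i} b^{i}. -/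
open scoped BigOperators

/-!
Put `Q = q ^ (p / (p - 2))`, so that `Q ^ (p - 2) = q ^ p =: t`. Pairing the `i`-th and the
`(p - 1 - i)`-th terms of `g(a, b)` gives `2 g(a, b) ≤ p (a ^ (p - 1) + b ^ (p - 1))`, hence
`g(a, b) ^ 2 ≤ t (a ^ p + b ^ p)` once `p ^ 2 a ^ (p - 2)` and `p ^ 2 b ^ (p - 2)` are at most
`2 t`. It then remains to see that `(a - b) ^ 2 t < a ^ p + b ^ p`. Write `c = 1 / (2 p)`: the
window has length `c ^ p Q`, so the left side is at most `c ^ (2 p) Q ^ p`, while the right side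
is at least `2 (c Q) ^ p`.
-/

open Finset

lemma sq_mul_two_pow_le {p : ℕ} (hp : 3 ≤ p) : p ^ 2 * 2 ^ (p - 2) ≤ 2 * (3 * p) ^ (p - 2) := by
  obtain rfl | hp4 : p = 3 ∨ 4 ≤ p := by omega
  · norm_num
  · calc p ^ 2 * 2 ^ (p - 2) ≤ p ^ (p - 2) * 3 ^ (p - 2) := by
          gcongr <;> omega
      _ = (3 * p) ^ (p - 2) := by rw [mul_pow, mul_comm]
      _ ≤ 2 * (3 * p) ^ (p - 2) := by omega

section OrderedRing

variable {R : Type*} [CommRing R] [LinearOrder R] [IsStrictOrderedRing R] {a b c t Q : R} {p : ℕ}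

lemma pow_mul_pow_add_pow_mul_pow_le (ha : 0 ≤ a) (hb : 0 ≤ b) (i j : ℕ) :
    a ^ i * b ^ j + a ^ j * b ^ i ≤ a ^ (i + j) + b ^ (i + j) := by
  rw [pow_add, pow_add]
  rcases le_total a b with hab | hba
  · have := mul_add_mul_le_mul_add_mul (pow_le_pow_left₀ ha hab i) (pow_le_pow_left₀ ha hab j)
    linarith
  · have := mul_add_mul_le_mul_add_mul (pow_le_pow_left₀ hb hba i) (pow_le_pow_left₀ hb hba j)
    linarith

lemma two_mul_geom_sum₂_le (ha : 0 ≤ a) (hb : 0 ≤ b) (p : ℕ) :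
    2 * ∑ i ∈ range p, a ^ (p - 1 - i) * b ^ i ≤ p * (a ^ (p - 1) + b ^ (p - 1)) := by
  have reflect : ∑ i ∈ range p, a ^ (p - 1 - i) * b ^ i =
      ∑ i ∈ range p, a ^ i * b ^ (p - 1 - i) :=
    (sum_congr rfl fun _ _ => mul_comm _ _).trans (geom_sum₂_comm b a p)
  calc 2 * ∑ i ∈ range p, a ^ (p - 1 - i) * b ^ i
      = ∑ i ∈ range p, (a ^ (p - 1 - i) * b ^ i + a ^ i * b ^ (p - 1 - i)) := by
        rw [sum_add_distrib, ← reflect, two_mul]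
    _ ≤ ∑ _i ∈ range p, (a ^ (p - 1) + b ^ (p - 1)) := by
        refine sum_le_sum fun i hi => ?_
        have hsplit : p - 1 - i + i = p - 1 := Nat.sub_add_cancel (by grind)
        simpa only [hsplit] using pow_mul_pow_add_pow_mul_pow_le ha hb (p - 1 - i) i
    _ = p * (a ^ (p - 1) + b ^ (p - 1)) := by rw [sum_const, card_range, nsmul_eq_mul]

lemma two_mul_geom_sum₂_sq_le (ha : 0 ≤ a) (hb : 0 ≤ b) (p : ℕ) :
    2 * (∑ i ∈ range p, a ^ (p - 1 - i) * b ^ i) ^ 2 ≤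
      p ^ 2 * ((a ^ (p - 1)) ^ 2 + (b ^ (p - 1)) ^ 2) := by
  have hsum := pow_le_pow_left₀ (by positivity) (two_mul_geom_sum₂_le ha hb p) 2
  have hmean := mul_le_mul_of_nonneg_left (add_sq_le (a := a ^ (p - 1)) (b := b ^ (p - 1)))
    (sq_nonneg (p : R))
  linarith

lemma geom_sum₂_sq_le (hp : 2 ≤ p) (ha : 0 ≤ a) (hb : 0 ≤ b)
    (hat : p ^ 2 * a ^ (p - 2) ≤ 2 * t) (hbt : p ^ 2 * b ^ (p - 2) ≤ 2 * t) :
    (∑ i ∈ range p, a ^ (p - 1 - i) * b ^ i) ^ 2 ≤ t * (a ^ p + b ^ p) := by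
  have hpow (x : R) : (x ^ (p - 1)) ^ 2 = x ^ (p - 2) * x ^ p := by
    rw [← pow_mul, ← pow_add]
    congr 1
    omega
  have hsum := two_mul_geom_sum₂_sq_le ha hb p
  rw [hpow, hpow] at hsum
  have ha' := mul_le_mul_of_nonneg_right hat (pow_nonneg ha p)
  have hb' := mul_le_mul_of_nonneg_right hbt (pow_nonneg hb p)
  linarith

lemma sq_sub_mul_pow_lt (hp : 2 ≤ p) (hc : 0 < c) (hc1 : c ≤ 1) (hQ : 0 < Q)
    (ha : c * Q ≤ a) (hb : c * Q ≤ b) (hab : |a - b| ≤ c ^ p * Q) :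
    (a - b) ^ 2 * Q ^ (p - 2) < a ^ p + b ^ p := by
  calc (a - b) ^ 2 * Q ^ (p - 2)
      ≤ (c ^ p * Q) ^ 2 * Q ^ (p - 2) := by
        gcongr ?_ * _
        exact sq_le_sq.2 (hab.trans (le_abs_self _))
    _ = c ^ p * (c * Q) ^ p := by
        rw [mul_pow, mul_assoc, pow_mul_pow_sub Q hp]
        ring
    _ ≤ (c * Q) ^ p := mul_le_of_le_one_left (by positivity) (pow_le_one₀ hc.le hc1)
    _ < (c * Q) ^ p + (c * Q) ^ p := lt_add_of_pos_left _ (by positivity)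
    _ ≤ a ^ p + b ^ p := by gcongr

lemma sq_mul_pow_sub_two_le (hp : 3 ≤ p) (ha : 0 ≤ a) (haQ : 3 * p * a ≤ 2 * Q) :
    p ^ 2 * a ^ (p - 2) ≤ 2 * Q ^ (p - 2) := by
  have hp2 : (p : R) ^ 2 * 2 ^ (p - 2) ≤ 2 * (3 * p) ^ (p - 2) := mod_cast sq_mul_two_pow_le hp
  have haQ' : (3 * p) ^ (p - 2) * a ^ (p - 2) ≤ 2 ^ (p - 2) * Q ^ (p - 2) := by
    simpa only [mul_pow] using pow_le_pow_left₀ (by positivity) haQ (p - 2)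
  refine le_of_mul_le_mul_left ?_ (show (0 : R) < 2 ^ (p - 2) by positivity)
  calc 2 ^ (p - 2) * (p ^ 2 * a ^ (p - 2)) = p ^ 2 * 2 ^ (p - 2) * a ^ (p - 2) := by ring
    _ ≤ 2 * (3 * p) ^ (p - 2) * a ^ (p - 2) := by gcongr
    _ ≤ 2 ^ (p - 2) * (2 * Q ^ (p - 2)) := by linarith

lemma three_mul_mul_add_pow_le_two (hp : 3 ≤ p) (hc : 0 ≤ c) (hpc : 2 * p * c ≤ 1) :
    3 * p * (c + c ^ p) ≤ 2 := by
  have hp3 : (3 : R) ≤ p := mod_cast hp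
  have hc6 : 6 * c ≤ 1 := by nlinarith
  have hcp : p * c ^ p ≤ p * c * c := by
    rw [mul_assoc, ← sq]
    gcongr ?_ * ?_
    exact pow_le_pow_of_le_one hc (by linarith) (by omega)
  have hpcc : 2 * p * c * c ≤ 1 * c := mul_le_mul_of_nonneg_right hpc hc
  linarith

theorem geom_sum₂_sq_lt_of_mem_Ioo (hp : 3 ≤ p) (hc : 0 < c) (hpc : 2 * p * c ≤ 1) (hQ : 0 < Q)
    (ha : a ∈ Set.Ioo (c * Q) ((c + c ^ p) * Q)) (hb : b ∈ Set.Ioo (c * Q) ((c + c ^ p) * Q)) :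
    (∑ i ∈ range p, a ^ (p - 1 - i) * b ^ i) ^ 2 <
      2 * (a ^ p + b ^ p) * Q ^ (p - 2) - (a - b) ^ 2 * (Q ^ (p - 2)) ^ 2 := by
  have hpos {x : R} (hx : x ∈ Set.Ioo (c * Q) ((c + c ^ p) * Q)) : 0 ≤ x :=
    (mul_pos hc hQ).le.trans hx.1.le
  have hsize {x : R} (hx : x ∈ Set.Ioo (c * Q) ((c + c ^ p) * Q)) :
      p ^ 2 * x ^ (p - 2) ≤ 2 * Q ^ (p - 2) := by
    refine sq_mul_pow_sub_two_le hp (hpos hx) ?_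
    calc 3 * p * x ≤ 3 * p * ((c + c ^ p) * Q) := by gcongr; exact hx.2.le
      _ = 3 * p * (c + c ^ p) * Q := by ring
      _ ≤ 2 * Q := by gcongr; exact three_mul_mul_add_pow_le_two hp hc.le hpc
  have hsum : (∑ i ∈ range p, a ^ (p - 1 - i) * b ^ i) ^ 2 ≤ Q ^ (p - 2) * (a ^ p + b ^ p) :=
    geom_sum₂_sq_le (by omega) (hpos ha) (hpos hb) (hsize ha) (hsize hb)
  have hp3 : (3 : R) ≤ p := mod_cast hp
  have hdiff : (a - b) ^ 2 * Q ^ (p - 2) < a ^ p + b ^ p :=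
    sq_sub_mul_pow_lt (by omega) hc (by nlinarith) hQ ha.1.le hb.1.le
      (abs_le.2 ⟨by linarith [ha.1, hb.2], by linarith [ha.2, hb.1]⟩)
  have hdiff' := mul_lt_mul_of_pos_right hdiff (pow_pos hQ (p - 2))
  linarith

end OrderedRing

lemma rpow_div_sub_two_pow {q : ℝ} (hq : 0 ≤ q) {p : ℕ} (hp : 2 < p) :
    (q ^ ((p : ℝ) / ((p : ℝ) - 2))) ^ (p - 2) = q ^ p := by
  have hp2 : (p : ℝ) - 2 ≠ 0 := sub_ne_zero.2 (mod_cast hp.ne')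
  rw [← Real.rpow_mul_natCast hq, Nat.cast_sub hp.le, Nat.cast_ofNat, div_mul_cancel₀ _ hp2,
    Real.rpow_natCast]

theorem stmt_15_general {p : ℕ} (hp : 3 ≤ p) {q a b : ℝ} (hq : 0 < q)
    (ha1 : 1 / (2 * (p : ℝ)) * q ^ ((p : ℝ) / ((p : ℝ) - 2)) < a)
    (ha2 : a < (1 / (2 * (p : ℝ)) + 1 / (2 ^ p * (p : ℝ) ^ p)) * q ^ ((p : ℝ) / ((p : ℝ) - 2)))
    (hb1 : 1 / (2 * (p : ℝ)) * q ^ ((p : ℝ) / ((p : ℝ) - 2)) < b)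
    (hb2 : b < (1 / (2 * (p : ℝ)) + 1 / (2 ^ p * (p : ℝ) ^ p)) * q ^ ((p : ℝ) / ((p : ℝ) - 2))) :
    0 < 2 * (a ^ p + b ^ p) * q ^ p - (a - b) ^ 2 * q ^ (2 * p) -
      (∑ i ∈ range p, a ^ (p - 1 - i) * b ^ i) ^ 2 := by
  rw [← mul_pow, ← one_div_pow] at ha2 hb2
  have hg := geom_sum₂_sq_lt_of_mem_Ioo hp (by positivity) (mul_one_div_cancel (by positivity)).le
    (Real.rpow_pos_of_pos hq _) ⟨ha1, ha2⟩ ⟨hb1, hb2⟩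
  rw [rpow_div_sub_two_pow hq.le hp, ← pow_mul, mul_comm p 2] at hg
  exact sub_pos.2 hg

theorem stmt_15 (p q : ℕ) (hp : p.Prime) (hp5 : 5 ≤ p) (hq : 0 < q) (a b : ℤ)
    (ha1 : (1 / (2 * (p : ℝ))) * (q : ℝ) ^ ((p : ℝ) / ((p : ℝ) - 2)) < (a : ℝ))
    (ha2 : (a : ℝ) < (1 / (2 * (p : ℝ)) + 1 / (2 ^ p * (p : ℝ) ^ p)) *
      (q : ℝ) ^ ((p : ℝ) / ((p : ℝ) - 2)))
    (hb1 : (1 / (2 * (p : ℝ))) * (q : ℝ) ^ ((p : ℝ) / ((p : ℝ) - 2)) < (b : ℝ))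
    (hb2 : (b : ℝ) < (1 / (2 * (p : ℝ)) + 1 / (2 ^ p * (p : ℝ) ^ p)) *
      (q : ℝ) ^ ((p : ℝ) / ((p : ℝ) - 2))) :
    0 < fPoly p (q : ℤ) a b := by
  have hreal := stmt_15_general (by omega) (Nat.cast_pos.2 hq) ha1 ha2 hb1 hb2
  unfold fPoly gPoly
  exact_mod_cast hreal
end
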